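/- arXiv:1303.4040 — 3 statements merged into one kernel-verified Lean document; each statement's English description precedes it below -/
import Mathlib

section
/- Let M₀, M₁ be natural numbers with M := M₀ + 2M₁ ≥ 1. Let α₁, …, α_M be pairwise distinct complex numbers with Re α_m > 0 for all m, such that α_m is real for 1 ≤ m ≤ M₀, Im α_m > 0 for M₀+1 ≤ m ≤ M₀+M₁, and α_{M₁+m} = conj(α_m) for M₀+1 ≤ m ≤ M₀+M₁. Let P₁, …, P_M be nonzero polynomials with complex coefficients such that P_m has real coefficients for 1 ≤ m ≤ M₀ and P_{M₁+m} is the coefficientwise complex conjugate of P_m for M₀+1 ≤ m ≤ M₀+M₁. Set K_m := deg P_m, and for 1 ≤ m ≤ M₀ let p_m ≠ 0 be the (real) leading coefficient of P_m. Define the real-valued kernel h(t) = Σ_{m=1}^M P_m(t) e^{-α_m t} for t > 0. For each 1 ≤ m ≤ M₀ define: N₊^{(m)} = N₋^{(m)} = (K_m+1)/2 if K_m is odd; N₊^{(m)} = K_m/2 + 1 and N₋^{(m)} = K_m/2 if K_m is even and p_m > 0; N₊^{(m)} = K_m/2 and N₋^{(m)} = K_m/2 + 1 if K_m is even and p_m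 < 0. Then N₊(Q_h) = Σ_{m=1}^{M₀} N₊^{(m)} + Σ_{m=M₀+1}^{M₀+M₁} (K_m + 1) and N₋(Q_h) = Σ_{m=1}^{M₀} N₋^{(m)} + Σ_{m=M₀+1}^{M₀+M₁} (K_m + 1). -/
open MeasureTheory
open scoped ComplexOrder

noncomputable section

/-- Complex-valued test functions: smooth, compactly supported, support inside `(0,∞)`. -/
def IsTestFun (f : ℝ → ℂ) : Prop :=
  ContDiff ℝ (⊤ : ℕ∞) f ∧ HasCompactSupport f ∧ tsupport f ⊆ Set.Ioi 0

/-- The Hankel quadratic form `Q_h[f] = ∫₀^∞∫₀^∞ h(t+s) f(s) conj(f(t)) ds dt`. -/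
def hankelQF (h : ℝ → ℂ) (f : ℝ → ℂ) : ℂ :=
  ∫ t in Set.Ioi (0:ℝ), ∫ s in Set.Ioi (0:ℝ), h (t + s) * f s * (starRingEnd ℂ) (f t)

/-- There is an `N`-dimensional subspace of test functions on which `Q` is strictly positive. -/
def posSubspace (Q : (ℝ → ℂ) → ℂ) (N : ℕ) : Prop :=
  ∃ L : Submodule ℂ (ℝ → ℂ), (∀ f ∈ L, IsTestFun f) ∧
    Module.finrank ℂ L = N ∧ ∀ f ∈ L, f ≠ 0 → 0 < Q f

/-- There is an `N`-dimensional subspace of test functions on which `Q` is strictly negative. -/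
def negSubspace (Q : (ℝ → ℂ) → ℂ) (N : ℕ) : Prop :=
  ∃ L : Submodule ℂ (ℝ → ℂ), (∀ f ∈ L, IsTestFun f) ∧
    Module.finrank ℂ L = N ∧ ∀ f ∈ L, f ≠ 0 → Q f < 0

/-- Supremum (in `ℕ∞`) of the dimensions `N` satisfying the predicate `P`. -/
def subspaceDimSup (P : ℕ → Prop) : ℕ∞ := sSup {n : ℕ∞ | ∃ N : ℕ, P N ∧ n = N}

/-!
Since `h(t + s) = e(t)* A e(s)`, where `e` is the vector of the functions `t^j e^{-α_m t}` with
`j ≤ deg P_m`, the form `Q_h` is the pullback of the Hermitian form of the matrix `A` along the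
moments `f ↦ ∫ t^j e^{-α_m t} f(t) dt`. Exponential monomials are linearly independent, so these
moments can be prescribed arbitrarily and `Q_h` has the signature of `A`. Up to pairing `α_m` with
its conjugate, `A` is block diagonal with anti-triangular blocks whose antidiagonal entries are
nonzero multiples of the leading coefficient of `P_m`; in particular `det A ≠ 0`. For real `α_m` the
coordinates with `2j > deg P_m` are isotropic, and so are all coordinates with `Im α_m > 0`.
Adding the middle coordinates `2j = deg P_m` according to the sign of the leading coefficient gives
coordinate subspaces on which `A` and `-A` are positive semidefinite; as their dimensions add up to
the size of `A`, they are the two inertia indices.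
-/

open Polynomial
open scoped Matrix ComplexConjugate

section Inertia

variable {𝕜 n k l p q : Type*} [RCLike 𝕜] [Fintype n]

theorem conjTranspose_mul_mul_submatrix (A : Matrix n n 𝕜) (B : Matrix n k 𝕜) (e : l → k) :
    (B.submatrix id e)ᴴ * A * B.submatrix id e = (Bᴴ * A * B).submatrix e e :=
  rfl

variable [Fintype k] [Fintype l] [Fintype p] [Fintype q]

theorem star_mulVec_dotProduct_mulVec_mulVec (A : Matrix n n 𝕜) (B : Matrix n k 𝕜) (x : k → 𝕜) :
    star (B *ᵥ x) ⬝ᵥ A *ᵥ B *ᵥ x = star x ⬝ᵥ (Bᴴ * A * B) *ᵥ x := by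
  rw [Matrix.star_mulVec, ← Matrix.dotProduct_mulVec, Matrix.mulVec_mulVec, Matrix.mulVec_mulVec,
    Matrix.mul_assoc]

theorem card_add_card_le_of_posDef_of_neg_posSemidef {A : Matrix n n 𝕜} {B : Matrix n k 𝕜}
    {C : Matrix n l 𝕜} (hB : (Bᴴ * A * B).PosDef) (hC : (Cᴴ * -A * C).PosSemidef)
    (hCinj : Function.Injective C.mulVec) :
    Fintype.card k + Fintype.card l ≤ Fintype.card n := by
  have hker : LinearMap.ker (B.mulVecLin.coprod C.mulVecLin) = ⊥ := by
    refine LinearMap.ker_eq_bot'.2 fun ⟨x, y⟩ hxy => ?_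
    have hBC : B *ᵥ x = C *ᵥ (-y) := by
      simpa [Matrix.mulVec_neg] using eq_neg_of_add_eq_zero_left hxy
    have hx : x = 0 := by
      by_contra hx
      have hpos := hB.dotProduct_mulVec_pos hx
      have hneg := hC.dotProduct_mulVec_nonneg (-y)
      rw [← star_mulVec_dotProduct_mulVec_mulVec] at hpos hneg
      rw [← hBC, Matrix.neg_mulVec, dotProduct_neg, Left.nonneg_neg_iff] at hneg
      exact hneg.not_gt hpos
    have hy : y = 0 := neg_eq_zero.1 (hCinj (by simpa [hx] using hBC.symm))
    rw [hx, hy, Prod.mk_zero_zero]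
  simpa using LinearMap.finrank_le_finrank_of_injective (LinearMap.ker_eq_bot.1 hker)

theorem card_add_card_le_of_posDef_of_neg_submatrix_posSemidef {A : Matrix n n 𝕜}
    {B : Matrix n k 𝕜} {e : l → n} (he : Function.Injective e) (hB : (Bᴴ * A * B).PosDef)
    (hA : ((-A).submatrix e e).PosSemidef) :
    Fintype.card k + Fintype.card l ≤ Fintype.card n := by
  classical
  let C : Matrix n l 𝕜 := (1 : Matrix n n 𝕜).submatrix id e
  refine card_add_card_le_of_posDef_of_neg_posSemidef (C := C) hB ?_ ?_
  · rwa [conjTranspose_mul_mul_submatrix, Matrix.conjTranspose_one, Matrix.one_mul, Matrix.mul_one]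
  · have hCC : Cᴴ * C = 1 := by
      rw [← Matrix.mul_one Cᴴ, conjTranspose_mul_mul_submatrix, Matrix.conjTranspose_one,
        Matrix.one_mul, Matrix.one_mul, Matrix.submatrix_one _ he]
    exact Function.LeftInverse.injective (g := Cᴴ.mulVec) fun x => by
      rw [Matrix.mulVec_mulVec, hCC, Matrix.one_mulVec]

theorem exists_posDef_iff_card_le [DecidableEq n] {A : Matrix n n 𝕜} (hA : A.IsHermitian)
    (hdet : A.det ≠ 0) {e : p → n} {f : q → n} (he : Function.Injective e)
    (hf : Function.Injective f) (hAe : (A.submatrix e e).PosSemidef)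
    (hAf : ((-A).submatrix f f).PosSemidef)
    (hcard : Fintype.card n ≤ Fintype.card p + Fintype.card q) :
    (∃ B : Matrix n k 𝕜, (Bᴴ * A * B).PosDef) ↔ Fintype.card k ≤ Fintype.card p := by
  classical
  refine ⟨fun ⟨B, hB⟩ => ?_, fun hk => ?_⟩
  · have := card_add_card_le_of_posDef_of_neg_submatrix_posSemidef hf hB hAf
    omega
  · let U : Matrix n n 𝕜 := hA.eigenvectorUnitary
    let d : n → ℝ := hA.eigenvalues
    have hU : Uᴴ * A * U = Matrix.diagonal (RCLike.ofReal ∘ d) := by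
      rw [← hA.conjStarAlgAut_star_eigenvectorUnitary, Unitary.conjStarAlgAut_star_apply]
      rfl
    have hd : ∀ i, d i ≠ 0 := fun i hi => hdet <| by
      rw [hA.det_eq_prod_eigenvalues, Finset.prod_eq_zero (Finset.mem_univ i)]
      simpa using hi
    have hneg : Fintype.card {i // d i < 0} + Fintype.card p ≤ Fintype.card n := by
      refine card_add_card_le_of_posDef_of_neg_submatrix_posSemidef (A := -A)
        (B := U.submatrix id Subtype.val) he ?_ (by rwa [neg_neg])
      rw [conjTranspose_mul_mul_submatrix, Matrix.mul_neg, Matrix.neg_mul, hU, Matrix.diagonal_neg,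
        Matrix.submatrix_diagonal _ _ Subtype.val_injective]
      exact Matrix.PosDef.diagonal fun i => by simpa using i.2
    have hsplit : Fintype.card {i // 0 < d i} + Fintype.card {i // d i < 0} = Fintype.card n := by
      rw [← Fintype.card_congr (Equiv.sumCompl fun i => 0 < d i), Fintype.card_sum]
      congr 1
      exact Fintype.card_congr (Equiv.subtypeEquivRight fun i => by grind)
    obtain ⟨g⟩ : Nonempty (k ↪ {i // 0 < d i}) :=
      Function.Embedding.nonempty_of_card_le (by omega)
    refine ⟨U.submatrix id (Subtype.val ∘ g), ?_⟩
    rw [conjTranspose_mul_mul_submatrix, hU,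
      Matrix.submatrix_diagonal _ _ (Subtype.val_injective.comp g.injective)]
    exact Matrix.PosDef.diagonal fun i => by simpa using (g i).2

theorem det_ne_zero_of_triangular [DecidableEq n] {R : Type*} [CommRing R] [IsDomain R]
    {A : Matrix n n R} (ρ : n → n) (d : n → ℕ) (hdiag : ∀ i, A (ρ i) i ≠ 0)
    (hoff : ∀ i j, d i ≤ d j → j ≠ i → A (ρ i) j = 0) : A.det ≠ 0 := by
  classical
  intro hdet
  obtain ⟨x, hx, hAx⟩ := Matrix.exists_mulVec_eq_zero_iff.2 hdet
  obtain ⟨i, hi, hmin⟩ := Finset.exists_min_image {i | x i ≠ 0} d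
    (by simpa [Finset.filter_nonempty_iff] using Function.ne_iff.1 hx)
  have hrow : A (ρ i) i * x i = 0 := by
    rw [← Finset.sum_eq_single_of_mem (f := fun j => A (ρ i) j * x j) i (Finset.mem_univ i)]
    · exact congrFun hAx (ρ i)
    · intro j _ hji
      by_cases hj : x j = 0
      · rw [hj, mul_zero]
      · rw [hoff i j (hmin j (by simpa using hj)) hji, zero_mul]
  exact mul_ne_zero (hdiag i) (by simpa using hi) hrow

end Inertia

section TestFunctions

/-- The complex vector space `C_c^∞((0,∞))` of test functions, as a subspace of all functions. -/
def testFuns : Submodule ℂ (ℝ → ℂ) where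
  carrier := {f | IsTestFun f}
  zero_mem' := ⟨contDiff_const, HasCompactSupport.zero, by simp [tsupport]⟩
  add_mem' := fun ⟨hf, hf', hf''⟩ ⟨hg, hg', hg''⟩ =>
    ⟨hf.add hg, hf'.add hg', (tsupport_add _ _).trans (Set.union_subset hf'' hg'')⟩
  smul_mem' := fun c f ⟨hf, hf', hf''⟩ =>
    ⟨contDiff_const.smul hf, hf'.mono (Function.support_const_smul_subset c f),
      (closure_mono (Function.support_const_smul_subset c f)).trans hf''⟩

theorem posSubspace_iff_exists_linearMap {Q : (ℝ → ℂ) → ℂ} (hQ : ¬0 < Q 0) {N : ℕ} :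
    posSubspace Q N ↔ ∃ g : (Fin N → ℂ) →ₗ[ℂ] testFuns, ∀ y ≠ 0, 0 < Q (g y) := by
  constructor
  · rintro ⟨L, hL, rfl, hpos⟩
    obtain ⟨v, hv⟩ := exists_linearIndependent_of_le_finrank (R := ℂ) (M := L) le_rfl
    refine ⟨Submodule.inclusion (p' := testFuns) hL ∘ₗ Fintype.linearCombination ℂ v,
      fun y hy => hpos _ (Fintype.linearCombination ℂ v y).2 ?_⟩
    refine fun h => hy (hv.fintypeLinearCombination_injective ?_)
    rw [map_zero]
    exact Subtype.ext h
  · rintro ⟨g, hg⟩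
    have hne : ∀ y ≠ 0, (g y : ℝ → ℂ) ≠ 0 := fun y hy h => hQ (h ▸ hg y hy)
    have hinj : Function.Injective (testFuns.subtype ∘ₗ g) :=
      LinearMap.ker_eq_bot.1 (LinearMap.ker_eq_bot'.2 fun y => not_imp_not.1 (hne y))
    refine ⟨LinearMap.range (testFuns.subtype ∘ₗ g), ?_, ?_, ?_⟩
    · rintro _ ⟨y, rfl⟩
      exact (g y).2
    · rw [LinearMap.finrank_range_of_inj hinj, Module.finrank_fin_fun]
    · rintro _ ⟨y, rfl⟩ hy
      exact hg y fun h => hy (by rw [h, map_zero])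

theorem negSubspace_iff_posSubspace_neg {Q : (ℝ → ℂ) → ℂ} {N : ℕ} :
    negSubspace Q N ↔ posSubspace (fun f => -Q f) N := by
  simp only [negSubspace, posSubspace, neg_pos]

theorem subspaceDimSup_eq_of_forall_iff {R : ℕ → Prop} {N : ℕ} (h : ∀ n, R n ↔ n ≤ N) :
    subspaceDimSup R = N := by
  refine le_antisymm (sSup_le ?_) (le_sSup ⟨N, (h N).2 le_rfl, rfl⟩)
  rintro _ ⟨n, hn, rfl⟩
  exact_mod_cast (h n).1 hn

variable {κ p q : Type*} [Fintype κ]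

theorem posSubspace_iff_exists_posDef {Q : (ℝ → ℂ) → ℂ} {A : Matrix κ κ ℂ} (hA : A.IsHermitian)
    (ℓ : testFuns →ₗ[ℂ] κ → ℂ) (hℓ : Function.Surjective ℓ)
    (hQ : ∀ f : testFuns, Q f = star (ℓ f) ⬝ᵥ A *ᵥ ℓ f) {N : ℕ} :
    posSubspace Q N ↔ ∃ B : Matrix κ (Fin N) ℂ, (Bᴴ * A * B).PosDef := by
  have hQ0 : ¬0 < Q 0 := by simpa using (hQ 0).not_gt
  have hform : ∀ (B : Matrix κ (Fin N) ℂ) (g : (Fin N → ℂ) →ₗ[ℂ] testFuns),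
      (∀ y, ℓ (g y) = B *ᵥ y) → ∀ y, Q (g y) = star y ⬝ᵥ (Bᴴ * A * B) *ᵥ y := fun B g hBg y => by
    rw [hQ, hBg, star_mulVec_dotProduct_mulVec_mulVec]
  rw [posSubspace_iff_exists_linearMap hQ0]
  constructor
  · rintro ⟨g, hg⟩
    let B := LinearMap.toMatrix' (ℓ ∘ₗ g)
    have hB := hform B g fun y => (LinearMap.toMatrix'_mulVec (ℓ ∘ₗ g) y).symm
    exact ⟨B, .of_dotProduct_mulVec_pos (Matrix.isHermitian_conjTranspose_mul_mul B hA)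
      fun y hy => hB y ▸ hg y hy⟩
  · rintro ⟨B, hB⟩
    obtain ⟨S, hS⟩ := ℓ.exists_rightInverse_of_surjective (LinearMap.range_eq_top.2 hℓ)
    let g := S ∘ₗ B.mulVecLin
    have hg := hform B g fun y => LinearMap.congr_fun hS (B *ᵥ y)
    exact ⟨g, fun y hy => hg y ▸ hB.dotProduct_mulVec_pos hy⟩

theorem subspaceDimSup_posSubspace_eq_card [DecidableEq κ] [Fintype p] [Fintype q]
    {Q : (ℝ → ℂ) → ℂ} {A : Matrix κ κ ℂ} (hA : A.IsHermitian) (hdet : A.det ≠ 0)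
    (ℓ : testFuns →ₗ[ℂ] κ → ℂ) (hℓ : Function.Surjective ℓ)
    (hQ : ∀ f : testFuns, Q f = star (ℓ f) ⬝ᵥ A *ᵥ ℓ f)
    {e : p → κ} {f : q → κ} (he : Function.Injective e) (hf : Function.Injective f)
    (hAe : (A.submatrix e e).PosSemidef) (hAf : ((-A).submatrix f f).PosSemidef)
    (hcard : Fintype.card κ ≤ Fintype.card p + Fintype.card q) :
    subspaceDimSup (posSubspace Q) = Fintype.card p :=
  subspaceDimSup_eq_of_forall_iff fun n => by
    rw [posSubspace_iff_exists_posDef hA ℓ hℓ hQ,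
      exists_posDef_iff_card_le hA hdet he hf hAe hAf hcard, Fintype.card_fin]

theorem subspaceDimSup_negSubspace_eq_card [DecidableEq κ] [Fintype p] [Fintype q]
    {Q : (ℝ → ℂ) → ℂ} {A : Matrix κ κ ℂ} (hA : A.IsHermitian) (hdet : A.det ≠ 0)
    (ℓ : testFuns →ₗ[ℂ] κ → ℂ) (hℓ : Function.Surjective ℓ)
    (hQ : ∀ f : testFuns, Q f = star (ℓ f) ⬝ᵥ A *ᵥ ℓ f)
    {e : p → κ} {f : q → κ} (he : Function.Injective e) (hf : Function.Injective f)
    (hAe : (A.submatrix e e).PosSemidef) (hAf : ((-A).submatrix f f).PosSemidef)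
    (hcard : Fintype.card κ ≤ Fintype.card p + Fintype.card q) :
    subspaceDimSup (negSubspace Q) = Fintype.card q := by
  simp only [funext fun N => propext (negSubspace_iff_posSubspace_neg (Q := Q) (N := N))]
  refine subspaceDimSup_posSubspace_eq_card hA.neg ?_ ℓ hℓ (fun f => ?_) hf he hAf ?_ (by omega)
  · simpa [Matrix.det_neg] using hdet
  · rw [hQ, Matrix.neg_mulVec, dotProduct_neg]
  · rwa [neg_neg]

end TestFunctions

section Moments

theorem IsTestFun.integrable_smul {E : Type*} [NormedAddCommGroup E] [NormedSpace ℂ E] {f : ℝ → ℂ}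
    (hf : IsTestFun f) {e : ℝ → E} (he : Continuous e) : Integrable fun t => f t • e t :=
  (hf.1.continuous.smul he).integrable_of_hasCompactSupport hf.2.1.smul_right

variable {E : Type*} [NormedAddCommGroup E] [NormedSpace ℂ E] [FiniteDimensional ℂ E] {e : ℝ → E}

/-- The moment `∫₀^∞ f(t) e(t) dt` of a test function `f` against a continuous curve `e`. -/
def curveMoment (he : Continuous e) : testFuns →ₗ[ℂ] E where
  toFun f := ∫ t in Set.Ioi 0, f.1 t • e t
  map_add' f g := by
    rw [← integral_add (f.2.integrable_smul he).integrableOn (g.2.integrable_smul he).integrableOn]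
    exact integral_congr_ae (.of_forall fun t => add_smul (f.1 t) (g.1 t) (e t))
  map_smul' c f := by
    rw [RingHom.id_apply, ← integral_smul]
    exact integral_congr_ae (.of_forall fun t => mul_smul c (f.1 t) (e t))

theorem apply_curveMoment (he : Continuous e) (φ : Module.Dual ℂ E) (f : testFuns) :
    φ (curveMoment he f) = ∫ t in Set.Ioi 0, φ (f.1 t • e t) :=
  have : CompleteSpace E := FiniteDimensional.complete ℂ E
  (φ.toContinuousLinearMap.integral_comp_comm (f.2.integrable_smul he).integrableOn).symm

theorem isTestFun_ofReal_comp {u : ℝ → ℝ} (hu : ContDiff ℝ (⊤ : ℕ∞) u) (hu' : HasCompactSupport u)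
    (hu'' : tsupport u ⊆ Set.Ioi 0) : IsTestFun fun t => (u t : ℂ) :=
  ⟨Complex.ofRealCLM.contDiff.comp hu, hu'.comp_left Complex.ofReal_zero,
    (closure_mono fun t ht => by simpa using ht).trans hu''⟩

theorem eqOn_zero_of_forall_apply_curveMoment_eq_zero (he : Continuous e) {φ : Module.Dual ℂ E}
    (hφ : ∀ f, φ (curveMoment he f) = 0) : Set.EqOn (fun t => φ (e t)) 0 (Set.Ioi 0) := by
  have hc : Continuous fun t => φ (e t) := φ.continuous_of_finiteDimensional.comp he
  have hae : ∀ᵐ t, t ∈ Set.Ioi (0 : ℝ) → φ (e t) = 0 := by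
    refine isOpen_Ioi.ae_eq_zero_of_integral_contDiff_smul_eq_zero
      (hc.locallyIntegrable.locallyIntegrableOn _) fun u hu hu' hu'' => ?_
    rw [← hφ ⟨_, isTestFun_ofReal_comp hu hu' hu''⟩, apply_curveMoment,
      ← setIntegral_eq_integral_of_forall_compl_eq_zero (s := Set.Ioi 0) fun t ht => by
        rw [image_eq_zero_of_notMem_tsupport fun h => ht (hu'' h), zero_smul]]
    simp only [map_smul, Complex.real_smul, smul_eq_mul]
  exact Measure.eqOn_open_of_ae_eq ((ae_restrict_iff' measurableSet_Ioi).2 hae) isOpen_Ioi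
    hc.continuousOn continuousOn_const

theorem curveMoment_surjective (he : Continuous e)
    (hspan : ∀ φ : Module.Dual ℂ E, Set.EqOn (fun t => φ (e t)) 0 (Set.Ioi 0) → φ = 0) :
    Function.Surjective (curveMoment he) := by
  by_contra hsurj
  obtain ⟨φ, hφ, hker⟩ := Submodule.exists_le_ker_of_lt_top _
    (lt_top_iff_ne_top.2 (mt LinearMap.range_eq_top.1 hsurj))
  exact hφ (hspan φ (eqOn_zero_of_forall_apply_curveMoment_eq_zero he
    fun f => hker (LinearMap.mem_range_self _ f)))

variable {κ : Type*} [Fintype κ] {A : Matrix κ κ ℂ}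

theorem conj_star_dotProduct_mulVec (hA : A.IsHermitian) (v w : κ → ℂ) :
    conj (star v ⬝ᵥ A *ᵥ w) = star w ⬝ᵥ A *ᵥ v := by
  rw [starRingEnd_apply, ← Matrix.star_dotProduct, Matrix.star_mulVec, hA.eq,
    ← Matrix.dotProduct_mulVec]

theorem hankelQF_eq_of_degenerate_kernel {h : ℝ → ℂ} {e : ℝ → κ → ℂ} (he : Continuous e)
    (hA : A.IsHermitian) (hker : ∀ t s, h (t + s) = star (e t) ⬝ᵥ A *ᵥ e s) (f : testFuns) :
    hankelQF h f = star (curveMoment he f) ⬝ᵥ A *ᵥ curveMoment he f := by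
  let x := curveMoment he f
  have hmoment (w : κ → ℂ) :
      ∫ t in Set.Ioi 0, f.1 t * (star w ⬝ᵥ A *ᵥ e t) = star w ⬝ᵥ A *ᵥ x := by
    simpa [Matrix.mulVec_smul] using
      (apply_curveMoment he ((dotProductBilin ℂ ℂ (star w)).comp A.mulVecLin) f).symm
  have hinner (t : ℝ) : ∫ s in Set.Ioi 0, h (t + s) * f.1 s * conj (f.1 t) =
      conj (f.1 t * (star x ⬝ᵥ A *ᵥ e t)) := by
    rw [integral_mul_const, map_mul, conj_star_dotProduct_mulVec hA, ← hmoment, mul_comm]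
    simp only [hker, mul_comm]
  rw [hankelQF, integral_congr_ae (.of_forall hinner), integral_conj, hmoment,
    conj_star_dotProduct_mulVec hA]

end Moments

section ExponentialPolynomials

variable {ι : Type*} [Fintype ι]

theorem sum_eval_derivative_mul_exp_eq_zero (β : ι → ℂ) (c : ℂ) {Q : ι → ℂ[X]}
    (hQ : ∀ t : ℝ, 0 < t → ∑ m, (Q m).eval (t : ℂ) * Complex.exp (β m * t) = 0) {t : ℝ}
    (ht : 0 < t) :
    ∑ m, (derivative (Q m) + C (β m - c) * Q m).eval (t : ℂ) * Complex.exp (β m * t) = 0 := by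
  have hderiv : HasDerivAt (fun t : ℝ => ∑ m, (Q m).eval (t : ℂ) * Complex.exp (β m * t))
      (∑ m, ((derivative (Q m)).eval (t : ℂ) * Complex.exp (β m * t) +
        (Q m).eval (t : ℂ) * (Complex.exp (β m * t) * (β m * 1)))) t :=
    HasDerivAt.fun_sum fun m _ => ((Q m).hasDerivAt (t : ℂ)).comp_ofReal.mul
      (((hasDerivAt_id (t : ℂ)).const_mul (β m)).cexp).comp_ofReal
  have hzero : HasDerivAt (fun t : ℝ => ∑ m, (Q m).eval (t : ℂ) * Complex.exp (β m * t)) 0 t :=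
    (hasDerivAt_const t (0 : ℂ)).congr_of_eventuallyEq <| by
      filter_upwards [lt_mem_nhds ht] with u hu using hQ u hu
  calc
    _ = ∑ m, ((derivative (Q m)).eval (t : ℂ) * Complex.exp (β m * t) +
          (Q m).eval (t : ℂ) * (Complex.exp (β m * t) * (β m * 1))) -
        c * ∑ m, (Q m).eval (t : ℂ) * Complex.exp (β m * t) := by
      rw [Finset.mul_sum, ← Finset.sum_sub_distrib]
      refine Finset.sum_congr rfl fun m _ => ?_
      rw [eval_add, eval_mul, eval_C]
      ring
    _ = 0 := by rw [hderiv.unique hzero, hQ t ht, mul_zero, sub_zero]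

theorem eq_zero_of_derivative_add_C_mul_eq_zero {R : Type*} [CommRing R] [IsDomain R] {c : R}
    (hc : c ≠ 0) {p : R[X]} (hp : derivative p + C c * p = 0) : p = 0 := by
  by_contra hne
  have hdeg := congrArg degree (eq_neg_of_add_eq_zero_right hp)
  rw [degree_C_mul hc, degree_neg] at hdeg
  exact (degree_derivative_lt hne).ne' hdeg

theorem eq_zero_of_forall_pos_eval_eq_zero {p : ℂ[X]} (hp : ∀ t : ℝ, 0 < t → p.eval (t : ℂ) = 0) :
    p = 0 :=
  eq_zero_of_infinite_isRoot p <|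
    ((Set.Ioi_infinite (0 : ℝ)).image Complex.ofReal_injective.injOn).mono <| by
      rintro _ ⟨t, ht, rfl⟩
      exact hp t ht

theorem degree_derivative_add_C_mul_le {R : Type*} [CommRing R] (c : R) (p : R[X]) :
    (derivative p + C c * p).degree ≤ p.degree :=
  (degree_add_le _ _).trans <|
    max_le degree_derivative_le ((C_mul' c p).symm ▸ degree_smul_le c p)

-- Differentiating after removing the factor `e^{β_a t}` lowers the degree of `Q a` only, so by
-- induction on the tuple of degrees the differentiated identity is trivial.
theorem eq_zero_of_sum_eval_mul_exp_eq_zero {β : ι → ℂ} (hβ : Function.Injective β) {Q : ι → ℂ[X]}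
    (hQ : ∀ t : ℝ, 0 < t → ∑ m, (Q m).eval (t : ℂ) * Complex.exp (β m * t) = 0) : Q = 0 := by
  induction hd : (fun m => (Q m).degree) using WellFoundedLT.induction generalizing Q with
  | ind d ih =>
    subst hd
    by_contra hne
    obtain ⟨a, ha⟩ := Function.ne_iff.1 hne
    have hlt : (fun m => (derivative (Q m) + C (β m - β a) * Q m).degree) <
        fun m => (Q m).degree := by
      refine Pi.lt_def.2 ⟨fun m => degree_derivative_add_C_mul_le _ _, a, ?_⟩
      rw [sub_self, C_0, zero_mul, add_zero]
      exact degree_derivative_lt ha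
    have hR := ih _ hlt (fun t => sum_eval_derivative_mul_exp_eq_zero β (β a) hQ) rfl
    have hQm : ∀ m ≠ a, Q m = 0 := fun m hm =>
      eq_zero_of_derivative_add_C_mul_eq_zero (sub_ne_zero.2 (hβ.ne hm)) (congrFun hR m)
    refine ha (eq_zero_of_forall_pos_eval_eq_zero fun t ht => ?_)
    have hsum := hQ t ht
    rw [Finset.sum_eq_single_of_mem a (Finset.mem_univ a) fun m _ hm => by
      rw [hQm m hm, eval_zero, zero_mul]] at hsum
    exact (mul_eq_zero.1 hsum).resolve_right (Complex.exp_ne_zero _)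

end ExponentialPolynomials

section HankelMatrix

variable {ι : Type*}

/-- The data `(α_m, P_m)` is invariant under complex conjugation, i.e. the kernel
`Σ_m P_m(t) e^{-α_m t}` is formally real. -/
def IsConjSymm (α : ι → ℂ) (P : ι → ℂ[X]) : Prop :=
  ∀ m, ∃ n, α n = conj (α m) ∧ P n = (P m).map (starRingEnd ℂ)

/-- The kernel `h(t) = Σ_m P_m(t) e^{-α_m t}`. -/
def expPolyKernel [Fintype ι] (α : ι → ℂ) (P : ι → ℂ[X]) (t : ℝ) : ℂ :=
  ∑ m, (P m).eval (t : ℂ) * Complex.exp (-(α m) * t)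

/-- Indices `(m, j)` with `j ≤ deg P_m`, labelling the functions `t^j e^{-α_m t}`. -/
abbrev MomentIdx (P : ι → ℂ[X]) : Type _ :=
  Σ m, Fin ((P m).natDegree + 1)

/-- The curve whose coordinates are the functions `t^j e^{-α_m t}`, `j ≤ deg P_m`. -/
def expPolyCurve (α : ι → ℂ) (P : ι → ℂ[X]) (t : ℝ) (i : MomentIdx P) : ℂ :=
  (t : ℂ) ^ (i.2 : ℕ) * Complex.exp (-(α i.1) * t)

open scoped Classical in
/-- The matrix of the Hankel form in the moments `∫ t^j e^{-α_m t} f(t) dt`. The Hasse derivative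
`P^{(j)} / j!` supplies the coefficient of `t^j s^k` in `P(t + s)`, and the conjugate exponents
are paired because the form is conjugate-linear in one of its arguments. -/
def hankelMatrix (α : ι → ℂ) (P : ι → ℂ[X]) : Matrix (MomentIdx P) (MomentIdx P) ℂ :=
  .of fun i i' => if α i.1 = conj (α i'.1) then (hasseDeriv i.2 (P i'.1)).coeff i'.2 else 0

variable {α : ι → ℂ} {P : ι → ℂ[X]}

theorem MomentIdx.ext {i i' : MomentIdx P} (h : i.1 = i'.1) (h' : (i.2 : ℕ) = i'.2) : i = i' := by
  obtain ⟨m, j⟩ := i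
  obtain ⟨m', j'⟩ := i'
  obtain rfl : m = m' := h
  exact congrArg (Sigma.mk m) (Fin.ext h')

theorem hankelMatrix_of_eq {i i' : MomentIdx P} (h : α i.1 = conj (α i'.1)) :
    hankelMatrix α P i i' = (hasseDeriv i.2 (P i'.1)).coeff i'.2 :=
  if_pos h

theorem hankelMatrix_of_ne {i i' : MomentIdx P} (h : α i.1 ≠ conj (α i'.1)) :
    hankelMatrix α P i i' = 0 :=
  if_neg h

theorem continuous_expPolyCurve : Continuous (expPolyCurve α P) := by
  unfold expPolyCurve
  fun_prop

theorem eq_zero_of_apply_expPolyCurve_eq_zero [Finite ι] (hα : Function.Injective α)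
    (φ : Module.Dual ℂ (MomentIdx P → ℂ))
    (hφ : Set.EqOn (fun t => φ (expPolyCurve α P t)) 0 (Set.Ioi 0)) : φ = 0 := by
  classical
  have := Fintype.ofFinite ι
  let Q : ι → ℂ[X] := fun m => ∑ j : Fin ((P m).natDegree + 1),
    C (φ fun i => if ⟨m, j⟩ = i then 1 else 0) * X ^ (j : ℕ)
  have hQ : Q = 0 := eq_zero_of_sum_eval_mul_exp_eq_zero (β := -α) (neg_injective.comp hα)
    fun t ht => by
      refine Eq.trans ?_ (hφ ht)
      change _ = φ (expPolyCurve α P t)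
      rw [φ.pi_apply_eq_sum_univ, Fintype.sum_sigma]
      refine Finset.sum_congr rfl fun m _ => ?_
      rw [eval_finsetSum, Finset.sum_mul]
      refine Finset.sum_congr rfl fun j _ => ?_
      rw [eval_C_mul, eval_X_pow, expPolyCurve, smul_eq_mul, Pi.neg_apply, mul_assoc, mul_comm]
  have hφ_basis (i : MomentIdx P) : φ (fun i' => if i = i' then 1 else 0) = 0 := by
    have hcoeff := congrArg (coeff · (i.2 : ℕ)) (congrFun hQ i.1)
    simpa [Q, finsetSum_coeff, coeff_X_pow, Fin.val_inj] using hcoeff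
  refine LinearMap.ext fun x => ?_
  simp only [φ.pi_apply_eq_sum_univ x, hφ_basis, smul_zero, Finset.sum_const_zero,
    LinearMap.zero_apply]

theorem coeff_hasseDeriv_comm {R : Type*} [CommSemiring R] (p : R[X]) (j k : ℕ) :
    (hasseDeriv j p).coeff k = (hasseDeriv k p).coeff j := by
  rw [hasseDeriv_coeff, hasseDeriv_coeff, add_comm k j, Nat.choose_symm_add]

theorem coeff_hasseDeriv_eq_zero {R : Type*} [Semiring R] {p : R[X]} {j k : ℕ}
    (h : p.natDegree < k + j) : (hasseDeriv j p).coeff k = 0 := by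
  rw [hasseDeriv_coeff, coeff_eq_zero_of_natDegree_lt h, mul_zero]

theorem coeff_hasseDeriv_of_add_eq {R : Type*} [Semiring R] {p : R[X]} {j k : ℕ}
    (h : k + j = p.natDegree) :
    (hasseDeriv j p).coeff k = (k + j).choose j * p.leadingCoeff := by
  rw [hasseDeriv_coeff, leadingCoeff, h]

theorem eval_add_eq_sum_hasseDeriv {R : Type*} [CommSemiring R] (p : R[X]) (t s : R) :
    p.eval (t + s) = ∑ j : Fin (p.natDegree + 1), ∑ k : Fin (p.natDegree + 1),
      t ^ (j : ℕ) * ((hasseDeriv j p).coeff k * s ^ (k : ℕ)) := by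
  rw [← taylor_eval, eval_eq_sum_range, natDegree_taylor, Finset.sum_range]
  refine Finset.sum_congr rfl fun j _ => ?_
  rw [taylor_coeff, eval_eq_sum_range' (n := p.natDegree + 1), Finset.sum_range, mul_comm,
    Finset.mul_sum]
  exact Nat.lt_succ_of_le ((natDegree_hasseDeriv_le p j).trans (Nat.sub_le _ _))

theorem im_leadingCoeff_eq_zero (hα : Function.Injective α) (h : IsConjSymm α P) {m : ι}
    (hm : (α m).im = 0) : (P m).leadingCoeff.im = 0 := by
  obtain ⟨n, hn, hPn⟩ := h m
  obtain rfl : n = m := hα (hn.trans (Complex.conj_eq_iff_im.2 hm))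
  rw [← Complex.conj_eq_iff_im, ← leadingCoeff_map, ← hPn]

theorem exists_conj_perm (hα : Function.Injective α) (h : IsConjSymm α P) :
    ∃ τ : Equiv.Perm (MomentIdx P), ∀ i, α (τ i).1 = conj (α i.1) ∧
      P (τ i).1 = (P i.1).map (starRingEnd ℂ) ∧ ((τ i).2 : ℕ) = i.2 := by
  choose σ hσα hσP using h
  have hσ : Function.Involutive σ := fun m => hα (by rw [hσα, hσα, Complex.conj_conj])
  let τ (i : MomentIdx P) : MomentIdx P := ⟨σ i.1, i.2.cast (by rw [hσP, natDegree_map])⟩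
  have hτ : Function.Involutive τ := fun i => MomentIdx.ext (hσ i.1) rfl
  exact ⟨hτ.toPerm, fun i => ⟨hσα i.1, hσP i.1, rfl⟩⟩

theorem isHermitian_hankelMatrix (hα : Function.Injective α) (h : IsConjSymm α P) :
    (hankelMatrix α P).IsHermitian := by
  refine .ext fun i i' => ?_
  by_cases hi : α i.1 = conj (α i'.1)
  · have hi' : α i'.1 = conj (α i.1) := by rw [hi, Complex.conj_conj]
    obtain ⟨n, hn, hPn⟩ := h i'.1
    obtain rfl : n = i.1 := hα (hn.trans hi.symm)
    have hcoeff (k : ℕ) : (P i.1).coeff k = star ((P i'.1).coeff k) := by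
      rw [hPn, coeff_map, starRingEnd_apply]
    rw [hankelMatrix_of_eq hi, hankelMatrix_of_eq hi', coeff_hasseDeriv_comm, hasseDeriv_coeff,
      hasseDeriv_coeff, hcoeff, star_mul', star_natCast, star_star]
  · have hi' : α i'.1 ≠ conj (α i.1) := fun hi' => hi (by rw [hi', Complex.conj_conj])
    rw [hankelMatrix_of_ne hi, hankelMatrix_of_ne hi', star_zero]

theorem expPolyKernel_add [Fintype ι] (hα : Function.Injective α) (h : IsConjSymm α P) (t s : ℝ) :
    expPolyKernel α P (t + s) =
      star (expPolyCurve α P t) ⬝ᵥ hankelMatrix α P *ᵥ expPolyCurve α P s := by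
  classical
  obtain ⟨τ, hτ⟩ := exists_conj_perm hα h
  have hcurve (i : MomentIdx P) : star (expPolyCurve α P t (τ i)) = expPolyCurve α P t i := by
    simp only [expPolyCurve, (hτ i).1, (hτ i).2.2, star_mul', star_pow]
    simp [← starRingEnd_apply, ← Complex.exp_conj]
  have hrow (i : MomentIdx P) : (hankelMatrix α P *ᵥ expPolyCurve α P s) (τ i) =
      ∑ k : Fin ((P i.1).natDegree + 1),
        (hasseDeriv i.2 (P i.1)).coeff k * expPolyCurve α P s ⟨i.1, k⟩ := by
    rw [Matrix.mulVec, dotProduct, Fintype.sum_sigma, Finset.sum_eq_single_of_mem i.1 (by simp)]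
    · refine Finset.sum_congr rfl fun k _ => ?_
      rw [hankelMatrix_of_eq (i := τ i) (i' := ⟨i.1, k⟩) (hτ i).1, (hτ i).2.2]
    · refine fun m _ hm => Finset.sum_eq_zero fun k _ => ?_
      rw [hankelMatrix_of_ne, zero_mul]
      exact fun hm' => hm (hα (star_injective (hm'.symm.trans (hτ i).1)))
  rw [dotProduct, ← Equiv.sum_comp τ, Fintype.sum_sigma, expPolyKernel]
  refine Finset.sum_congr rfl fun m _ => ?_
  rw [Complex.ofReal_add, eval_add_eq_sum_hasseDeriv, mul_add, Complex.exp_add, Finset.sum_mul]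
  refine Finset.sum_congr rfl fun j _ => ?_
  rw [Pi.star_apply, hcurve, hrow, Finset.mul_sum, Finset.sum_mul]
  refine Finset.sum_congr rfl fun k _ => ?_
  simp only [expPolyCurve]
  ring

theorem det_hankelMatrix_ne_zero [Fintype ι] [DecidableEq ι] (hα : Function.Injective α)
    (h : IsConjSymm α P) (hP : ∀ m, P m ≠ 0) : (hankelMatrix α P).det ≠ 0 := by
  obtain ⟨τ, hτ⟩ := exists_conj_perm hα h
  let rev (i : MomentIdx P) : MomentIdx P := ⟨i.1, Fin.rev i.2⟩
  have hrev (i : MomentIdx P) : (i.2 : ℕ) + (τ (rev i)).2 = (P i.1).natDegree := by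
    rw [(hτ (rev i)).2.2]
    exact Fin.add_rev_cast i.2
  refine det_ne_zero_of_triangular (τ ∘ rev) (fun i => i.2) (fun i => ?_) fun i i' hii' hne => ?_
  · rw [Function.comp_apply, hankelMatrix_of_eq (i' := i) (hτ (rev i)).1,
      coeff_hasseDeriv_of_add_eq (hrev i)]
    exact mul_ne_zero (Nat.cast_ne_zero.2 (Nat.choose_pos (Nat.le_add_left _ _)).ne')
      (leadingCoeff_ne_zero.2 (hP i.1))
  · by_cases hα' : α (τ (rev i)).1 = conj (α i'.1)
    · have hm : i.1 = i'.1 := hα (star_injective ((hτ (rev i)).1.symm.trans hα'))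
      have hlt : (i.2 : ℕ) < i'.2 := hii'.lt_of_ne fun hj => hne (MomentIdx.ext hm.symm hj.symm)
      rw [Function.comp_apply, hankelMatrix_of_eq hα', coeff_hasseDeriv_eq_zero]
      have hdeg := congrArg (fun m => (P m).natDegree) hm
      have hrev_i := hrev i
      omega
    · exact hankelMatrix_of_ne hα'

end HankelMatrix

section HalfCoords

variable {ι : Type*} [Fintype ι] {α : ι → ℂ} {P : ι → ℂ[X]} {b : ι → Prop}

open scoped Classical in
/-- Coordinates spanning a subspace on which the Hankel matrix is semidefinite: all those with `α_m`
in the upper half-plane and, for real `α_m`, those with `2j > deg P_m`, together with the middle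
one `2j = deg P_m` if `b m` holds. -/
def halfCoords (α : ι → ℂ) (P : ι → ℂ[X]) (b : ι → Prop) : Finset (MomentIdx P) :=
  {i | 0 < (α i.1).im ∨ (α i.1).im = 0 ∧
    ((P i.1).natDegree < 2 * i.2 ∨ 2 * i.2 = (P i.1).natDegree ∧ b i.1)}

theorem mem_halfCoords {i : MomentIdx P} : i ∈ halfCoords α P b ↔ 0 < (α i.1).im ∨
    (α i.1).im = 0 ∧
      ((P i.1).natDegree < 2 * i.2 ∨ 2 * i.2 = (P i.1).natDegree ∧ b i.1) := by
  simp [halfCoords]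

theorem im_nonneg_of_mem_halfCoords {i : MomentIdx P} (hi : i ∈ halfCoords α P b) :
    0 ≤ (α i.1).im :=
  (mem_halfCoords.1 hi).elim le_of_lt fun him => him.1.ge

theorem eq_of_hankelMatrix_ne_zero (hα : Function.Injective α) {i i' : MomentIdx P}
    (hi : i ∈ halfCoords α P b) (hi' : i' ∈ halfCoords α P b) (hne : hankelMatrix α P i i' ≠ 0) :
    i = i' ∧ (α i.1).im = 0 ∧ 2 * i.2 = (P i.1).natDegree ∧ b i.1 := by
  have hαα : α i.1 = conj (α i'.1) := by
    by_contra h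
    exact hne (hankelMatrix_of_ne h)
  have him : (α i.1).im = -(α i'.1).im := by rw [hαα, Complex.conj_im]
  have hdeg : (i'.2 + i.2 : ℕ) ≤ (P i'.1).natDegree := by
    by_contra! h
    exact hne ((hankelMatrix_of_eq hαα).trans (coeff_hasseDeriv_eq_zero h))
  have him_i : (α i.1).im = 0 := by
    linarith [im_nonneg_of_mem_halfCoords hi, im_nonneg_of_mem_halfCoords hi']
  have hi := ((mem_halfCoords.1 hi).resolve_left him_i.not_gt).2
  have hi' := ((mem_halfCoords.1 hi').resolve_left fun hpos => by linarith).2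
  have hm : i.1 = i'.1 := hα <| hαα.trans <| Complex.conj_eq_iff_im.2 (by linarith)
  have hK := congrArg (fun m => (P m).natDegree) hm
  exact ⟨MomentIdx.ext hm (by omega), him_i, by omega, (hi.resolve_left (by omega)).2⟩

theorem posSemidef_smul_hankelMatrix_submatrix_halfCoords (hα : Function.Injective α) {c : ℂ}
    (hb : ∀ m, (α m).im = 0 → b m → 0 ≤ c * (P m).leadingCoeff) :
    ((c • hankelMatrix α P).submatrix ((↑) : halfCoords α P b → MomentIdx P) (↑)).PosSemidef := by
  classical
  have hdiag : (c • hankelMatrix α P).submatrix ((↑) : halfCoords α P b → MomentIdx P) (↑) =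
      .diagonal fun i => c * hankelMatrix α P i i := by
    ext i i'
    by_cases hii' : i = i'
    · rw [hii', Matrix.diagonal_apply_eq, Matrix.submatrix_apply, Matrix.smul_apply, smul_eq_mul]
    · have hzero : hankelMatrix α P i i' = 0 := by
        by_contra hne
        exact hii' (Subtype.ext (eq_of_hankelMatrix_ne_zero hα i.2 i'.2 hne).1)
      rw [Matrix.diagonal_apply_ne _ hii', Matrix.submatrix_apply, Matrix.smul_apply, hzero,
        smul_zero]
  rw [hdiag]
  refine .diagonal fun ⟨i, hi⟩ => ?_
  by_cases hne : hankelMatrix α P i i = 0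
  · exact (mul_eq_zero_of_right c hne).ge
  · obtain ⟨-, him, hdeg, hbi⟩ := eq_of_hankelMatrix_ne_zero hα hi hi hne
    change 0 ≤ c * hankelMatrix α P i i
    rw [hankelMatrix_of_eq (Complex.conj_eq_iff_im.2 him).symm,
      coeff_hasseDeriv_of_add_eq (by omega), mul_left_comm]
    exact mul_nonneg (Nat.cast_nonneg _) (hb i.1 him hbi)

theorem posSemidef_hankelMatrix_submatrix_halfCoords (hα : Function.Injective α)
    (h : IsConjSymm α P) (hb : ∀ m, b m → 0 ≤ (P m).leadingCoeff.re) :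
    ((hankelMatrix α P).submatrix ((↑) : halfCoords α P b → MomentIdx P) (↑)).PosSemidef := by
  rw [← one_smul ℂ (hankelMatrix α P)]
  refine posSemidef_smul_hankelMatrix_submatrix_halfCoords hα fun m hm hbm => ?_
  rw [one_mul, Complex.nonneg_iff]
  exact ⟨hb m hbm, (im_leadingCoeff_eq_zero hα h hm).symm⟩

theorem posSemidef_neg_hankelMatrix_submatrix_halfCoords (hα : Function.Injective α)
    (h : IsConjSymm α P) (hb : ∀ m, b m → (P m).leadingCoeff.re ≤ 0) :
    ((-hankelMatrix α P).submatrix ((↑) : halfCoords α P b → MomentIdx P) (↑)).PosSemidef := by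
  rw [← neg_one_smul ℂ (hankelMatrix α P)]
  refine posSemidef_smul_hankelMatrix_submatrix_halfCoords hα fun m hm hbm => ?_
  rw [neg_one_mul, Complex.nonneg_iff, Complex.neg_re, Complex.neg_im,
    im_leadingCoeff_eq_zero hα h hm, neg_zero]
  exact ⟨neg_nonneg.2 (hb m hbm), rfl⟩

theorem card_momentIdx_le (hα : Function.Injective α) (h : IsConjSymm α P) (b : ι → Prop) :
    Fintype.card (MomentIdx P) ≤
      (halfCoords α P b).card + (halfCoords α P fun m => ¬ b m).card := by
  classical
  obtain ⟨τ, hτ⟩ := exists_conj_perm hα h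
  rw [← Nat.sub_le_iff_le_add', ← Finset.card_compl]
  -- Conjugating `α_m` and reversing `j` moves each coordinate missing from one set into the other.
  refine Finset.card_le_card_of_injOn (τ ∘ fun i => ⟨i.1, i.2.rev⟩) (fun i hi => ?_)
    (τ.injective.comp ?_).injOn
  · let i' := τ ⟨i.1, i.2.rev⟩
    obtain ⟨hτα, -, hτj⟩ : α i'.1 = conj (α i.1) ∧ P i'.1 = (P i.1).map (starRingEnd ℂ) ∧
      (i'.2 : ℕ) = i.2.rev := hτ ⟨i.1, i.2.rev⟩
    rw [Finset.mem_coe, Finset.mem_compl, mem_halfCoords, not_or, not_lt] at hi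
    change i' ∈ halfCoords α P fun m => ¬ b m
    rw [mem_halfCoords, hτα, Complex.conj_im]
    obtain him | him := hi.1.lt_or_eq
    · exact .inl (neg_pos.2 him)
    · have hm : i'.1 = i.1 := hα (hτα.trans (Complex.conj_eq_iff_im.2 him))
      have hrev := Fin.add_rev_cast i.2
      refine .inr ⟨by rw [him, neg_zero], ?_⟩
      have hb : b i'.1 ↔ b i.1 := by rw [hm]
      grind
  · rintro ⟨m, j⟩ ⟨m', j'⟩ hii'
    grind [Fin.rev_inj]

theorem card_filter_upper_half (K : ℕ) (b : Prop) [Decidable b] :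
    ((Finset.range (K + 1)).filter fun j => K < 2 * j ∨ 2 * j = K ∧ b).card =
      if K % 2 = 1 then (K + 1) / 2 else if b then K / 2 + 1 else K / 2 := by
  have hIco : (Finset.range (K + 1)).filter (fun j => K < 2 * j ∨ 2 * j = K ∧ b) =
      Finset.Ico (if b then (K + 1) / 2 else K / 2 + 1) (K + 1) := by
    ext j
    by_cases hb : b <;> simp [hb] <;> omega
  rw [hIco, Nat.card_Ico]
  split_ifs <;> omega

theorem card_halfCoords [DecidablePred b] : (halfCoords α P b).card =
    (∑ m with (α m).im = 0, if (P m).natDegree % 2 = 1 then ((P m).natDegree + 1) / 2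
      else if b m then (P m).natDegree / 2 + 1 else (P m).natDegree / 2) +
    ∑ m with 0 < (α m).im, ((P m).natDegree + 1) := by
  classical
  simp only [← card_filter_upper_half]
  rw [halfCoords, Finset.card_filter, Fintype.sum_sigma, Finset.sum_filter, Finset.sum_filter,
    ← Finset.sum_add_distrib]
  refine Finset.sum_congr rfl fun m _ => ?_
  rcases lt_trichotomy (α m).im 0 with him | him | him
  · simp [him.not_gt, him.ne]
  · simp only [him, lt_irrefl, false_or, true_and, if_true, if_false, add_zero,
      Finset.card_filter, Finset.sum_range]
  · simp [him, him.ne']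

end HalfCoords

section Signature

/-- The contribution `N₊^{(m)}` to the positive index of a real exponent with polynomial `p`. -/
def posIndex (p : ℂ[X]) : ℕ :=
  if p.natDegree % 2 = 1 then (p.natDegree + 1) / 2
  else if 0 < p.leadingCoeff.re then p.natDegree / 2 + 1
  else p.natDegree / 2

/-- The contribution `N₋^{(m)}` to the negative index of a real exponent with polynomial `p`. -/
def negIndex (p : ℂ[X]) : ℕ :=
  if p.natDegree % 2 = 1 then (p.natDegree + 1) / 2
  else if 0 < p.leadingCoeff.re then p.natDegree / 2
  else p.natDegree / 2 + 1

theorem finite_rank_hankel_signature_general {ι : Type*} [Fintype ι] {α : ι → ℂ} {P : ι → ℂ[X]}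
    (hα : Function.Injective α) (hP : ∀ m, P m ≠ 0) (h : IsConjSymm α P) :
    subspaceDimSup (posSubspace (hankelQF (expPolyKernel α P))) =
      (∑ m with (α m).im = 0, posIndex (P m) +
        ∑ m with 0 < (α m).im, ((P m).natDegree + 1) : ℕ) ∧
    subspaceDimSup (negSubspace (hankelQF (expPolyKernel α P))) =
      (∑ m with (α m).im = 0, negIndex (P m) +
        ∑ m with 0 < (α m).im, ((P m).natDegree + 1) : ℕ) := by
  classical
  let b (m : ι) : Prop := 0 < (P m).leadingCoeff.re
  have hcurve := continuous_expPolyCurve (α := α) (P := P)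
  have hsurj := curveMoment_surjective hcurve (eq_zero_of_apply_expPolyCurve_eq_zero hα)
  have hA := isHermitian_hankelMatrix hα h
  have hdet := det_hankelMatrix_ne_zero hα h hP
  have hQ := hankelQF_eq_of_degenerate_kernel hcurve hA (expPolyKernel_add hα h)
  have hcard := card_momentIdx_le hα h b
  have hpos := posSemidef_hankelMatrix_submatrix_halfCoords (b := b) hα h fun m hm => hm.le
  have hneg := posSemidef_neg_hankelMatrix_submatrix_halfCoords (b := fun m => ¬ b m) hα h
    fun m hm => not_lt.1 hm
  simp only [← Fintype.card_coe] at hcard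
  constructor
  · rw [subspaceDimSup_posSubspace_eq_card hA hdet _ hsurj hQ Subtype.val_injective
      Subtype.val_injective hpos hneg hcard, Fintype.card_coe, card_halfCoords]
    rfl
  · rw [subspaceDimSup_negSubspace_eq_card hA hdet _ hsurj hQ Subtype.val_injective
      Subtype.val_injective hpos hneg hcard, Fintype.card_coe, card_halfCoords]
    simp only [ite_not, negIndex, b]

end Signature

section OrderedExponents

theorem sum_fin_filter {M : Type*} [AddCommMonoid M] {n : ℕ} {s : Finset ℕ} (p : ℕ → Prop)
    [DecidablePred p] (f : ℕ → M) (hs : ∀ m, m ∈ s ↔ m < n ∧ p m) :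
    ∑ m ∈ {m : Fin n | p m}, f m = ∑ m ∈ s, f m := by
  rw [Finset.sum_filter, Fin.sum_univ_eq_sum_range fun m => if p m then f m else 0,
    ← Finset.sum_filter]
  refine Finset.sum_congr (Finset.ext fun m => ?_) fun _ _ => rfl
  rw [hs, Finset.mem_filter, Finset.mem_range]

variable {M₀ M₁ : ℕ} {α : ℕ → ℂ} {P : ℕ → ℂ[X]}

theorem im_neg_of_conj_index (hαim : ∀ m, M₀ ≤ m → m < M₀ + M₁ → 0 < (α m).im)
    (hαconj : ∀ m, M₀ ≤ m → m < M₀ + M₁ → α (m + M₁) = conj (α m)) {m : ℕ}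
    (hm : M₀ + M₁ ≤ m) (hm' : m < M₀ + 2 * M₁) : (α m).im < 0 := by
  obtain ⟨n, rfl⟩ := Nat.exists_eq_add_of_le' (show M₁ ≤ m by omega)
  rw [hαconj n (by omega) (by omega), Complex.conj_im]
  exact neg_neg_of_pos (hαim n (by omega) (by omega))

theorem mem_range_iff_im_eq_zero (hαreal : ∀ m < M₀, (α m).im = 0)
    (hαim : ∀ m, M₀ ≤ m → m < M₀ + M₁ → 0 < (α m).im)
    (hαconj : ∀ m, M₀ ≤ m → m < M₀ + M₁ → α (m + M₁) = conj (α m)) (m : ℕ) :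
    m ∈ Finset.range M₀ ↔ m < M₀ + 2 * M₁ ∧ (α m).im = 0 := by
  rw [Finset.mem_range]
  refine ⟨fun hm => ⟨by omega, hαreal m hm⟩, fun ⟨hm, him⟩ => ?_⟩
  by_contra! hm₀
  rcases lt_or_ge m (M₀ + M₁) with hm₁ | hm₁
  · exact (hαim m hm₀ hm₁).ne' him
  · exact (im_neg_of_conj_index hαim hαconj hm₁ hm).ne him

theorem mem_Ico_iff_im_pos (hαreal : ∀ m < M₀, (α m).im = 0)
    (hαim : ∀ m, M₀ ≤ m → m < M₀ + M₁ → 0 < (α m).im)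
    (hαconj : ∀ m, M₀ ≤ m → m < M₀ + M₁ → α (m + M₁) = conj (α m)) (m : ℕ) :
    m ∈ Finset.Ico M₀ (M₀ + M₁) ↔ m < M₀ + 2 * M₁ ∧ 0 < (α m).im := by
  rw [Finset.mem_Ico]
  refine ⟨fun ⟨hm, hm'⟩ => ⟨by omega, hαim m hm hm'⟩, fun ⟨hm, him⟩ => ⟨?_, ?_⟩⟩ <;> by_contra! hm'
  · exact him.ne' (hαreal m hm')
  · exact him.not_gt (im_neg_of_conj_index hαim hαconj hm' hm)

theorem isConjSymm_fin (hαreal : ∀ m < M₀, (α m).im = 0)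
    (hαconj : ∀ m, M₀ ≤ m → m < M₀ + M₁ → α (m + M₁) = conj (α m))
    (hPreal : ∀ m < M₀, ∀ j, ((P m).coeff j).im = 0)
    (hPconj : ∀ m, M₀ ≤ m → m < M₀ + M₁ → ∀ j, (P (m + M₁)).coeff j = conj ((P m).coeff j)) :
    IsConjSymm (fun m : Fin (M₀ + 2 * M₁) => α m) fun m => P m := by
  rintro ⟨m, hm⟩
  rcases lt_or_ge m M₀ with hm₀ | hm₀
  · refine ⟨⟨m, hm⟩, (Complex.conj_eq_iff_im.2 (hαreal m hm₀)).symm, Polynomial.ext fun j => ?_⟩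
    rw [coeff_map, Complex.conj_eq_iff_im.2 (hPreal m hm₀ j)]
  rcases lt_or_ge m (M₀ + M₁) with hm₁ | hm₁
  · refine ⟨⟨m + M₁, by omega⟩, hαconj m hm₀ hm₁, Polynomial.ext fun j => ?_⟩
    rw [coeff_map, hPconj m hm₀ hm₁]
  · obtain ⟨n, rfl⟩ := Nat.exists_eq_add_of_le' (show M₁ ≤ m by omega)
    refine ⟨⟨n, by omega⟩, ?_, Polynomial.ext fun j => ?_⟩
    · change α n = conj (α (n + M₁))
      rw [hαconj n (by omega) (by omega), Complex.conj_conj]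
    · rw [coeff_map, hPconj n (by omega) (by omega), Complex.conj_conj]

end OrderedExponents

/-- Numbers of positive and negative eigenvalues of a finite-rank Hankel operator with kernel
`h(t) = Σ_{m=1}^{M} P_m(t) e^{-α_m t}`, `M = M₀ + 2M₁` (indices `0,…,M₀-1` real,
indices `M₀,…,M₀+M₁-1` in the upper half-plane, indices `M₀+M₁,…,M-1` their conjugates). -/
theorem finite_rank_hankel_signature (M₀ M₁ : ℕ) (hM : 1 ≤ M₀ + 2 * M₁)
    (α : ℕ → ℂ) (P : ℕ → Polynomial ℂ)
    (hdist : ∀ m < M₀ + 2 * M₁, ∀ n < M₀ + 2 * M₁, m ≠ n → α m ≠ α n)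
    (hre : ∀ m < M₀ + 2 * M₁, 0 < (α m).re)
    (hαreal : ∀ m < M₀, (α m).im = 0)
    (hαim : ∀ m, M₀ ≤ m → m < M₀ + M₁ → 0 < (α m).im)
    (hαconj : ∀ m, M₀ ≤ m → m < M₀ + M₁ → α (m + M₁) = (starRingEnd ℂ) (α m))
    (hPne : ∀ m < M₀ + 2 * M₁, P m ≠ 0)
    (hPreal : ∀ m < M₀, ∀ j, ((P m).coeff j).im = 0)
    (hPconj : ∀ m, M₀ ≤ m → m < M₀ + M₁ →
      ∀ j, (P (m + M₁)).coeff j = (starRingEnd ℂ) ((P m).coeff j))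
    (Np Nm : ℕ → ℕ)
    (hNp : ∀ m < M₀, Np m =
      if (P m).natDegree % 2 = 1 then ((P m).natDegree + 1) / 2
      else if 0 < ((P m).leadingCoeff).re then (P m).natDegree / 2 + 1
      else (P m).natDegree / 2)
    (hNm : ∀ m < M₀, Nm m =
      if (P m).natDegree % 2 = 1 then ((P m).natDegree + 1) / 2
      else if 0 < ((P m).leadingCoeff).re then (P m).natDegree / 2
      else (P m).natDegree / 2 + 1) :
    subspaceDimSup (posSubspace (hankelQF (fun t : ℝ =>
        ∑ m ∈ Finset.range (M₀ + 2 * M₁), (P m).eval (t : ℂ) * Complex.exp (-(α m) * t)))) =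
      ((∑ m ∈ Finset.range M₀, Np m
        + ∑ m ∈ Finset.Ico M₀ (M₀ + M₁), ((P m).natDegree + 1) : ℕ) : ℕ∞)
    ∧ subspaceDimSup (negSubspace (hankelQF (fun t : ℝ =>
        ∑ m ∈ Finset.range (M₀ + 2 * M₁), (P m).eval (t : ℂ) * Complex.exp (-(α m) * t)))) =
      ((∑ m ∈ Finset.range M₀, Nm m
        + ∑ m ∈ Finset.Ico M₀ (M₀ + M₁), ((P m).natDegree + 1) : ℕ) : ℕ∞) := by
  have hα : Function.Injective fun m : Fin (M₀ + 2 * M₁) => α m := fun m n hmn =>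
    Fin.ext (by_contra fun hne => hdist m m.2 n n.2 hne hmn)
  have hkernel : (fun t : ℝ => ∑ m ∈ Finset.range (M₀ + 2 * M₁),
      (P m).eval (t : ℂ) * Complex.exp (-(α m) * t)) =
        expPolyKernel (fun m : Fin (M₀ + 2 * M₁) => α m) fun m => P m :=
    funext fun t => Finset.sum_range _
  have hreal (f : ℕ → ℕ) := sum_fin_filter (fun m => (α m).im = 0) f
    (mem_range_iff_im_eq_zero hαreal hαim hαconj)
  have hupper (f : ℕ → ℕ) := sum_fin_filter (fun m => 0 < (α m).im) f
    (mem_Ico_iff_im_pos hαreal hαim hαconj)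
  have hposIndex : ∑ m ∈ Finset.range M₀, Np m = ∑ m ∈ Finset.range M₀, posIndex (P m) :=
    Finset.sum_congr rfl fun m hm => hNp m (Finset.mem_range.1 hm)
  have hnegIndex : ∑ m ∈ Finset.range M₀, Nm m = ∑ m ∈ Finset.range M₀, negIndex (P m) :=
    Finset.sum_congr rfl fun m hm => hNm m (Finset.mem_range.1 hm)
  rw [hkernel, hposIndex, hnegIndex, ← hreal, ← hreal, ← hupper]
  exact finite_rank_hankel_signature_general hα (fun m => hPne m m.2)
    (isConjSymm_fin hαreal hαconj hPreal hPconj)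
end
end

section
/- Let α > 0 and let k ≥ -1 be a real number, and set h(t) = t^k e^{-α t} for t > 0. If k ∈ [-1, 0], then Q_h[f] ≥ 0 for all f ∈ C_c^∞((0,∞)). If k > 0, then the form is not sign-definite: there exist f₊, f₋ ∈ C_c^∞((0,∞)) with Q_h[f₊] > 0 and Q_h[f₋] < 0. -/
open MeasureTheory
open scoped ComplexOrder

noncomputable section

/-!
An exponential kernel `e^{-ct}` gives the rank-one form `|∫ e^{-ct} f(t) dt|²`, which settles
`k = 0`. For `k < 0` the kernel `t^k e^{-αt}` is a mixture of the kernels `e^{-(x + α)t}`, `x > 0`,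
with the positive weights `x^{-k-1} / Γ(-k)`, so its form is nonnegative.

Conversely, letting bump functions concentrate at points `x i > 0` shows that every value
`∑ i, ∑ j, c i * c j * h (x i + x j)` is a limit of values of the form. On two points, nonnegativity
would therefore force `h (x + y) ^ 2 ≤ h (2 * x) * h (2 * y)`. For the kernel `t^k e^{-αt}` the
exponentials cancel, leaving `(x + y)^{2k} ≤ (4xy)^k`, which AM-GM contradicts when `k > 0`
and `x ≠ y`.
-/

section Basic

variable {h : ℝ → ℂ} {f : ℝ → ℂ}

lemma IsTestFun.integrable (hf : IsTestFun f) : Integrable f :=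
  hf.1.continuous.integrable_of_hasCompactSupport hf.2.1

lemma IsTestFun.exists_support_subset_Icc (hf : IsTestFun f) :
    ∃ a b, 0 < a ∧ a ≤ b ∧ Function.support f ⊆ Set.Icc a b := by
  rcases (tsupport f).eq_empty_or_nonempty with hempty | hne
  · exact ⟨1, 1, one_pos, le_rfl, by simp [tsupport_eq_empty_iff.mp hempty]⟩
  · obtain ⟨a, ha, hmin⟩ := IsCompact.exists_isLeast hf.2.1 hne
    obtain ⟨b, hb, hmax⟩ := IsCompact.exists_isGreatest hf.2.1 hne
    exact ⟨a, b, hf.2.2 ha, hmin hb, fun t ht =>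
      ⟨hmin (subset_tsupport f ht), hmax (subset_tsupport f ht)⟩⟩

lemma isTestFun_of_support_subset {K : Set ℝ} (hf : ContDiff ℝ (⊤ : ℕ∞) f) (hK : IsCompact K)
    (hKpos : K ⊆ Set.Ioi 0) (hsupp : Function.support f ⊆ K) : IsTestFun f :=
  ⟨hf, .of_support_subset_isCompact hK hsupp,
    (closure_minimal hsupp hK.isClosed).trans hKpos⟩

lemma hankelQF_congr {h' : ℝ → ℂ} (heq : Set.EqOn h h' (Set.Ioi 0)) :
    hankelQF h f = hankelQF h' f := by
  refine setIntegral_congr_fun measurableSet_Ioi fun t ht => ?_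
  refine setIntegral_congr_fun measurableSet_Ioi fun s hs => ?_
  simp only [heq (add_pos ht hs : 0 < t + s)]

end Basic

section Laplace

variable {Ω : Type*} [MeasurableSpace Ω] {μ : Measure Ω} {X : Ω → ℝ} {f : ℝ → ℂ} {a b : ℝ}

lemma hankelQF_exp_neg_mul (c : ℝ) (f : ℝ → ℂ) :
    hankelQF (fun t => (Real.exp (-(c * t)) : ℂ)) f =
      ((‖∫ t in Set.Ioi 0, (Real.exp (-(c * t)) : ℂ) * f t‖ ^ 2 : ℝ) : ℂ) := by
  set u : ℝ → ℂ := fun t => (Real.exp (-(c * t)) : ℂ) * f t with hu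
  have hsplit (t s : ℝ) : (Real.exp (-(c * (t + s))) : ℂ) * f s * (starRingEnd ℂ) (f t) =
      u s * (starRingEnd ℂ) (u t) := by
    rw [hu, mul_add, neg_add, Real.exp_add, map_mul, Complex.conj_ofReal]
    push_cast
    ring
  simp_rw [hankelQF, hsplit, integral_mul_const, integral_const_mul, integral_conj]
  rw [Complex.mul_conj, Complex.normSq_eq_norm_sq]

lemma exp_neg_mul_le_add (x : ℝ) {t : ℝ} (ht : t ∈ Set.Icc a b) :
    Real.exp (-(x * t)) ≤ Real.exp (-(x * a)) + Real.exp (-(x * b)) := by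
  rcases le_total 0 x with hx | hx
  · exact le_add_of_le_of_nonneg
      (Real.exp_le_exp.2 (neg_le_neg (mul_le_mul_of_nonneg_left ht.1 hx))) (Real.exp_nonneg _)
  · exact le_add_of_nonneg_of_le (Real.exp_nonneg _)
      (Real.exp_le_exp.2 (neg_le_neg (mul_le_mul_of_nonpos_left ht.2 hx)))

lemma integrable_exp_neg_mul_add_mul_conj {ν : Measure ℝ} [SFinite ν] [SFinite μ]
    (hX : Measurable X)
    (ha : Integrable (fun ω => Real.exp (-(X ω * (a + a)))) μ)
    (hb : Integrable (fun ω => Real.exp (-(X ω * (b + b)))) μ)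
    (hf : Integrable f ν) (hsupp : Function.support f ⊆ Set.Icc a b) :
    Integrable (fun p : (ℝ × ℝ) × Ω => (Real.exp (-(X p.2 * (p.1.1 + p.1.2))) : ℂ) *
      (f p.1.2 * (starRingEnd ℂ) (f p.1.1))) ((ν.prod ν).prod μ) := by
  have hff : Integrable (fun z : ℝ × ℝ => f z.2 * (starRingEnd ℂ) (f z.1)) (ν.prod ν) := by
    simpa only [mul_comm, Complex.conjCLE_apply] using
      (Complex.conjCLE.integrable_comp_iff.2 hf).mul_prod hf
  refine (hff.norm.mul_prod (ha.add hb)).mono' ?_ (.of_forall fun ⟨⟨t, s⟩, ω⟩ => ?_)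
  · exact (Measurable.aestronglyMeasurable (by fun_prop)).mul hff.aestronglyMeasurable.comp_fst
  · rw [norm_mul, Complex.norm_real, Real.norm_eq_abs, Real.abs_exp, mul_comm]
    by_cases hz : f s * (starRingEnd ℂ) (f t) = 0
    · simp [hz]
    have hs : s ∈ Set.Icc a b := hsupp (left_ne_zero_of_mul hz)
    have ht : t ∈ Set.Icc a b := hsupp ((map_ne_zero _).1 (right_ne_zero_of_mul hz))
    exact mul_le_mul_of_nonneg_left
      (exp_neg_mul_le_add _ ⟨add_le_add ht.1 hs.1, add_le_add ht.2 hs.2⟩) (norm_nonneg _)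

theorem hankelQF_integral_exp_neg_mul [SFinite μ] (hX : Measurable X)
    (ha : Integrable (fun ω => Real.exp (-(X ω * (a + a)))) μ)
    (hb : Integrable (fun ω => Real.exp (-(X ω * (b + b)))) μ)
    (hf : IntegrableOn f (Set.Ioi 0)) (hsupp : Function.support f ⊆ Set.Icc a b) :
    hankelQF (fun t => ((∫ ω, Real.exp (-(X ω * t)) ∂μ : ℝ) : ℂ)) f =
      ∫ ω, hankelQF (fun t => (Real.exp (-(X ω * t)) : ℂ)) f ∂μ := by
  have hint := integrable_exp_neg_mul_add_mul_conj hX ha hb hf hsupp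
  simp_rw [hankelQF, ← integral_complex_ofReal, mul_assoc, ← integral_mul_const]
  rw [← integral_prod _ hint.integral_prod_left, integral_integral_swap hint]
  refine integral_congr_ae ?_
  filter_upwards [hint.prod_left_ae] with ω hω
  exact integral_prod _ hω

theorem IsTestFun.hankelQF_integral_exp_neg_mul_nonneg [SFinite μ] (hX : Measurable X)
    (hμ : ∀ t > 0, Integrable (fun ω => Real.exp (-(X ω * t))) μ) (hf : IsTestFun f) :
    0 ≤ hankelQF (fun t => ((∫ ω, Real.exp (-(X ω * t)) ∂μ : ℝ) : ℂ)) f := by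
  obtain ⟨a, b, ha, hab, hsupp⟩ := hf.exists_support_subset_Icc
  have hb : 0 < b := ha.trans_le hab
  rw [hankelQF_integral_exp_neg_mul hX (hμ _ (add_pos ha ha)) (hμ _ (add_pos hb hb))
    hf.integrable.integrableOn hsupp]
  simp_rw [hankelQF_exp_neg_mul]
  exact integral_nonneg fun ω => Complex.zero_le_real.2 (sq_nonneg _)

end Laplace

section PowerWeight

/-- The measure `x^{-k-1} / Γ(-k) dx` on `(0,∞)`, whose Laplace transform is `t^k` for `k < 0`. -/
def powerWeight (k : ℝ) : Measure ℝ :=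
  (volume.restrict (Set.Ioi 0)).withDensity
    fun x => ENNReal.ofReal (x ^ (-k - 1) / Real.Gamma (-k))

instance (k : ℝ) : SFinite (powerWeight k) := by
  unfold powerWeight
  infer_instance

variable {k : ℝ}

lemma integral_exp_neg_mul_powerWeight (hk : k < 0) {t : ℝ} (ht : 0 < t) :
    ∫ x, Real.exp (-(x * t)) ∂powerWeight k = t ^ k := by
  have hΓ : 0 < Real.Gamma (-k) := Real.Gamma_pos_of_pos (neg_pos.2 hk)
  have hdensity : ∀ x ∈ Set.Ioi (0 : ℝ),
      (ENNReal.ofReal (x ^ (-k - 1) / Real.Gamma (-k))).toReal • Real.exp (-(x * t)) =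
        (Real.Gamma (-k))⁻¹ * (x ^ (-k - 1) * Real.exp (-(t * x))) := fun x hx => by
    rw [ENNReal.toReal_ofReal (div_nonneg (Real.rpow_nonneg (le_of_lt hx) _) hΓ.le), smul_eq_mul,
      mul_comm x t]
    ring
  rw [powerWeight, integral_withDensity_eq_integral_toReal_smul (by fun_prop)
      (.of_forall fun _ => ENNReal.ofReal_lt_top),
    setIntegral_congr_fun measurableSet_Ioi hdensity, integral_const_mul,
    Real.integral_rpow_mul_exp_neg_mul_Ioi (neg_pos.2 hk) ht, one_div, Real.inv_rpow ht.le,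
    Real.rpow_neg ht.le, inv_inv, mul_comm, mul_inv_cancel_right₀ hΓ.ne']

lemma integral_exp_neg_add_mul_powerWeight (hk : k < 0) (α : ℝ) {t : ℝ} (ht : 0 < t) :
    ∫ x, Real.exp (-((x + α) * t)) ∂powerWeight k = t ^ k * Real.exp (-α * t) := by
  simp_rw [add_mul, neg_add, Real.exp_add, integral_mul_const,
    integral_exp_neg_mul_powerWeight hk ht, neg_mul]

theorem IsTestFun.hankelQF_rpow_mul_exp_nonneg {α : ℝ} {f : ℝ → ℂ} (hf : IsTestFun f)
    (hk : k ≤ 0) :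
    0 ≤ hankelQF (fun t : ℝ => ((t ^ k * Real.exp (-α * t) : ℝ) : ℂ)) f := by
  rcases hk.lt_or_eq with hneg | rfl
  · have hlaplace (t : ℝ) (ht : 0 < t) := integral_exp_neg_add_mul_powerWeight hneg α ht
    rw [← hankelQF_congr fun t ht => congrArg Complex.ofReal (hlaplace t ht)]
    refine hf.hankelQF_integral_exp_neg_mul_nonneg (by fun_prop) fun t ht =>
      .of_integral_ne_zero ?_
    rw [hlaplace t ht]
    exact (mul_pos (Real.rpow_pos_of_pos ht k) (Real.exp_pos _)).ne'
  · simp_rw [Real.rpow_zero, one_mul, neg_mul, hankelQF_exp_neg_mul]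
    exact Complex.zero_le_real.2 (sq_nonneg _)

end PowerWeight

section Bilinear

/-- The polarization `∫₀^∞∫₀^∞ h(t+s) u(s) v(t) ds dt` of the Hankel form, for real functions. -/
def hankelBilin (h u v : ℝ → ℝ) : ℝ :=
  ∫ t in Set.Ioi 0, ∫ s in Set.Ioi 0, h (t + s) * u s * v t

variable {h u v : ℝ → ℝ}

lemma hankelQF_ofReal (h u : ℝ → ℝ) :
    hankelQF (fun t => (h t : ℂ)) (fun t => (u t : ℂ)) = (hankelBilin h u u : ℂ) := by
  simp only [hankelQF, hankelBilin, Complex.conj_ofReal, ← Complex.ofReal_mul,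
    integral_complex_ofReal]

/-- Lebesgue measure on the quadrant `(0,∞)²`. -/
abbrev quadrantVolume : Measure (ℝ × ℝ) :=
  (volume.restrict (Set.Ioi 0)).prod (volume.restrict (Set.Ioi 0))

/-- Integrability over the quadrant `(0,∞)²` of the integrand of `hankelBilin h u v`. -/
def HankelIntegrable (h u v : ℝ → ℝ) : Prop :=
  Integrable (fun z : ℝ × ℝ => h (z.1 + z.2) * u z.2 * v z.1) quadrantVolume

lemma HankelIntegrable.hankelBilin_eq (huv : HankelIntegrable h u v) :
    hankelBilin h u v =
      ∫ z : ℝ × ℝ, h (z.1 + z.2) * u z.2 * v z.1 ∂quadrantVolume :=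
  (integral_prod _ huv).symm

lemma hankelIntegrable_of_support_subset_Icc (hh : ContinuousOn h (Set.Ioi 0))
    (hu : Continuous u) (hv : Continuous v) {a b c d : ℝ} (hac : 0 < a + c)
    (hus : Function.support u ⊆ Set.Icc a b) (hvs : Function.support v ⊆ Set.Icc c d) :
    HankelIntegrable h u v := by
  have hcont : ContinuousOn (fun z : ℝ × ℝ => h (z.1 + z.2) * u z.2 * v z.1)
      (Set.Icc c d ×ˢ Set.Icc a b) :=
    ((hh.comp (by fun_prop) fun z hz =>
      hac.trans_le (by linarith [hz.1.1, hz.2.1])).mul (by fun_prop)).mul (by fun_prop)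
  have hsupp : Function.support (fun z : ℝ × ℝ => h (z.1 + z.2) * u z.2 * v z.1) ⊆
      Set.Icc c d ×ˢ Set.Icc a b := fun z hz =>
    ⟨hvs (right_ne_zero_of_mul hz), hus (right_ne_zero_of_mul (left_ne_zero_of_mul hz))⟩
  rw [HankelIntegrable, quadrantVolume, Measure.prod_restrict]
  exact ((integrableOn_iff_integrable_of_support_subset hsupp).1
    (hcont.integrableOn_compact (isCompact_Icc.prod isCompact_Icc))).integrableOn

lemma hankelBilin_sum_sum {ι : Type*} {S : Finset ι} {u : ι → ℝ → ℝ} (c : ι → ℝ)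
    (hint : ∀ i ∈ S, ∀ j ∈ S, HankelIntegrable h (u i) (u j)) :
    hankelBilin h (fun t => ∑ i ∈ S, c i * u i t) (fun t => ∑ i ∈ S, c i * u i t) =
      ∑ i ∈ S, ∑ j ∈ S, c i * c j * hankelBilin h (u i) (u j) := by
  have hexpand (z : ℝ × ℝ) :
      h (z.1 + z.2) * (∑ i ∈ S, c i * u i z.2) * (∑ j ∈ S, c j * u j z.1) =
        ∑ i ∈ S, ∑ j ∈ S, c i * c j * (h (z.1 + z.2) * u i z.2 * u j z.1) := by
    rw [mul_assoc, Finset.sum_mul_sum, Finset.mul_sum]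
    simp_rw [Finset.mul_sum]
    exact Finset.sum_congr rfl fun i _ => Finset.sum_congr rfl fun j _ => by ring
  have hterm : ∀ i ∈ S, ∀ j ∈ S, Integrable (fun z : ℝ × ℝ =>
      c i * c j * (h (z.1 + z.2) * u i z.2 * u j z.1)) quadrantVolume :=
    fun i hi j hj => (hint i hi j hj).const_mul _
  have hsum : HankelIntegrable h (fun t => ∑ i ∈ S, c i * u i t)
      (fun t => ∑ i ∈ S, c i * u i t) := by
    simp_rw [HankelIntegrable, hexpand]
    exact integrable_finsetSum _ fun i hi => integrable_finsetSum _ (hterm i hi)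
  simp_rw [hsum.hankelBilin_eq, hexpand]
  rw [integral_finsetSum _ fun i hi => integrable_finsetSum _ (hterm i hi)]
  refine Finset.sum_congr rfl fun i hi => ?_
  rw [integral_finsetSum _ (hterm i hi)]
  refine Finset.sum_congr rfl fun j hj => ?_
  rw [integral_const_mul, (hint i hi j hj).hankelBilin_eq]

end Bilinear

section Bump

open Filter Topology

variable {h : ℝ → ℝ} {x y : ℝ}

lemma support_bump_normed_subset_Icc (φ : ContDiffBump x) :
    Function.support (φ.normed volume) ⊆ Set.Icc (x - φ.rOut) (x + φ.rOut) := by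
  rw [φ.support_normed_eq, Real.ball_eq_Ioo]
  exact Set.Ioo_subset_Icc_self

lemma setIntegral_Ioi_bump_normed (φ : ContDiffBump x) (hφ : φ.rOut < x) :
    ∫ t in Set.Ioi 0, φ.normed volume t = 1 := by
  rw [setIntegral_eq_integral_of_forall_compl_eq_zero, φ.integral_normed]
  exact fun t ht => by_contra fun hne =>
    ht ((sub_pos.2 hφ).trans_le (support_bump_normed_subset_Icc φ hne).1)

lemma hankelIntegrable_bump (hh : ContinuousOn h (Set.Ioi 0)) (φ : ContDiffBump x)
    (ψ : ContDiffBump y) (hφ : φ.rOut < x) (hψ : ψ.rOut < y) :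
    HankelIntegrable h (φ.normed volume) (ψ.normed volume) :=
  hankelIntegrable_of_support_subset_Icc hh φ.continuous_normed ψ.continuous_normed
    (by linarith) (support_bump_normed_subset_Icc φ) (support_bump_normed_subset_Icc ψ)

lemma abs_mul_bump_mul_bump_sub_le (φ : ContDiffBump x) (ψ : ContDiffBump y) {L ε : ℝ}
    (hε : ∀ r, |r - (x + y)| ≤ φ.rOut + ψ.rOut → |h r - L| ≤ ε) (s t : ℝ) :
    |h (t + s) * φ.normed volume s * ψ.normed volume t -
        L * (ψ.normed volume t * φ.normed volume s)| ≤
      ε * (ψ.normed volume t * φ.normed volume s) := by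
  have hfactor : h (t + s) * φ.normed volume s * ψ.normed volume t -
      L * (ψ.normed volume t * φ.normed volume s) =
        (h (t + s) - L) * (ψ.normed volume t * φ.normed volume s) := by ring
  have hnonneg : 0 ≤ ψ.normed volume t * φ.normed volume s :=
    mul_nonneg (ψ.nonneg_normed t) (φ.nonneg_normed s)
  rw [hfactor, abs_mul, abs_of_nonneg hnonneg]
  rcases hnonneg.eq_or_lt with hzero | hpos
  · rw [← hzero, mul_zero, mul_zero]
  have ht := support_bump_normed_subset_Icc ψ (left_ne_zero_of_mul hpos.ne')
  have hs := support_bump_normed_subset_Icc φ (right_ne_zero_of_mul hpos.ne')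
  refine mul_le_mul_of_nonneg_right (hε _ (abs_le.2 ⟨?_, ?_⟩)) hnonneg
  · linarith [ht.1, hs.1]
  · linarith [ht.2, hs.2]

lemma abs_hankelBilin_bump_sub_le (hh : ContinuousOn h (Set.Ioi 0)) (φ : ContDiffBump x)
    (ψ : ContDiffBump y) (hφ : φ.rOut < x) (hψ : ψ.rOut < y) {L ε : ℝ}
    (hε : ∀ r, |r - (x + y)| ≤ φ.rOut + ψ.rOut → |h r - L| ≤ ε) :
    |hankelBilin h (φ.normed volume) (ψ.normed volume) - L| ≤ ε := by
  set w : ℝ × ℝ → ℝ := fun z => ψ.normed volume z.1 * φ.normed volume z.2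
  have hw_int : Integrable w quadrantVolume :=
    ψ.integrable_normed.integrableOn.mul_prod φ.integrable_normed.integrableOn
  have hw_one : ∫ z, w z ∂quadrantVolume = 1 := by
    rw [integral_prod_mul, setIntegral_Ioi_bump_normed ψ hψ, setIntegral_Ioi_bump_normed φ hφ,
      one_mul]
  have hint := hankelIntegrable_bump hh φ ψ hφ hψ
  calc |hankelBilin h (φ.normed volume) (ψ.normed volume) - L|
      = ‖∫ z, h (z.1 + z.2) * φ.normed volume z.2 * ψ.normed volume z.1 - L * w z
          ∂quadrantVolume‖ := by
        rw [integral_sub hint (hw_int.const_mul L), integral_const_mul, hw_one, mul_one,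
          ← hint.hankelBilin_eq, Real.norm_eq_abs]
    _ ≤ ∫ z, ε * w z ∂quadrantVolume :=
        norm_integral_le_of_norm_le (hw_int.const_mul ε)
          (.of_forall fun z => abs_mul_bump_mul_bump_sub_le φ ψ hε z.2 z.1)
    _ = ε := by rw [integral_const_mul, hw_one, mul_one]

variable {κ : Type*} {l : Filter κ}

lemma tendsto_hankelBilin_bump (hh : ContinuousOn h (Set.Ioi 0)) (hx : 0 < x) (hy : 0 < y)
    {φ : κ → ContDiffBump x} {ψ : κ → ContDiffBump y}
    (hφ : Tendsto (fun n => (φ n).rOut) l (𝓝 0)) (hψ : Tendsto (fun n => (ψ n).rOut) l (𝓝 0)) :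
    Tendsto (fun n => hankelBilin h ((φ n).normed volume) ((ψ n).normed volume)) l
      (𝓝 (h (x + y))) := by
  refine Metric.nhds_basis_closedBall.tendsto_right_iff.2 fun ε hε => ?_
  have hcont : ContinuousAt h (x + y) := hh.continuousAt (Ioi_mem_nhds (add_pos hx hy))
  obtain ⟨δ, hδ, hclose⟩ := Metric.continuousAt_iff.1 hcont ε hε
  have hsum : Tendsto (fun n => (φ n).rOut + (ψ n).rOut) l (𝓝 0) := by simpa using hφ.add hψ
  filter_upwards [hφ.eventually_lt_const hx, hψ.eventually_lt_const hy,
    hsum.eventually_lt_const hδ] with n hφn hψn hδn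
  rw [Metric.mem_closedBall, Real.dist_eq]
  exact abs_hankelBilin_bump_sub_le hh _ _ hφn hψn fun r hr => (hclose (hr.trans_lt hδn)).le

variable {ι : Type*} {S : Finset ι} {p : ι → ℝ}

lemma isTestFun_sum_bump (c : ι → ℝ) (φ : ∀ i, ContDiffBump (p i))
    (hφ : ∀ i ∈ S, (φ i).rOut < p i) :
    IsTestFun fun t => ((∑ i ∈ S, c i * (φ i).normed volume t : ℝ) : ℂ) := by
  refine isTestFun_of_support_subset
    (K := ⋃ i ∈ S, Set.Icc (p i - (φ i).rOut) (p i + (φ i).rOut)) ?_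
    (S.isCompact_biUnion fun i _ => isCompact_Icc) ?_ fun t ht => ?_
  · exact Complex.ofRealCLM.contDiff.comp
      (ContDiff.sum fun i _ => contDiff_const.mul (φ i).contDiff_normed)
  · exact Set.iUnion₂_subset fun i hi t ht => (sub_pos.2 (hφ i hi)).trans_le ht.1
  · obtain ⟨i, hi, hne⟩ := Finset.exists_ne_zero_of_sum_ne_zero (Complex.ofReal_ne_zero.1 ht)
    exact Set.mem_biUnion hi (support_bump_normed_subset_Icc (φ i) (right_ne_zero_of_mul hne))

lemma tendsto_hankelBilin_sum_bump (hh : ContinuousOn h (Set.Ioi 0)) (c : ι → ℝ)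
    (hp : ∀ i ∈ S, 0 < p i) {φ : ∀ i, κ → ContDiffBump (p i)}
    (hφ : ∀ i ∈ S, Tendsto (fun n => (φ i n).rOut) l (𝓝 0)) :
    Tendsto (fun n => hankelBilin h (fun t => ∑ i ∈ S, c i * (φ i n).normed volume t)
      (fun t => ∑ i ∈ S, c i * (φ i n).normed volume t)) l
      (𝓝 (∑ i ∈ S, ∑ j ∈ S, c i * c j * h (p i + p j))) := by
  have hlim : Tendsto (fun n => ∑ i ∈ S, ∑ j ∈ S,
      c i * c j * hankelBilin h ((φ i n).normed volume) ((φ j n).normed volume)) l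
      (𝓝 (∑ i ∈ S, ∑ j ∈ S, c i * c j * h (p i + p j))) :=
    tendsto_finsetSum _ fun i hi => tendsto_finsetSum _ fun j hj =>
      (tendsto_hankelBilin_bump hh (hp i hi) (hp j hj) (hφ i hi) (hφ j hj)).const_mul _
  have hsmall : ∀ᶠ n in l, ∀ i ∈ S, (φ i n).rOut < p i :=
    (eventually_all_finset S).2 fun i hi => (hφ i hi).eventually_lt_const (hp i hi)
  refine hlim.congr' ?_
  filter_upwards [hsmall] with n hn
  exact (hankelBilin_sum_sum c fun i hi j hj =>
    hankelIntegrable_bump hh _ _ (hn i hi) (hn j hj)).symm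

theorem exists_isTestFun_hankelQF_mem_of_mem_nhds (hh : ContinuousOn h (Set.Ioi 0)) (c : ι → ℝ)
    (hp : ∀ i ∈ S, 0 < p i) {U : Set ℝ}
    (hU : U ∈ 𝓝 (∑ i ∈ S, ∑ j ∈ S, c i * c j * h (p i + p j))) :
    ∃ f, IsTestFun f ∧ ∃ q ∈ U, hankelQF (fun t => (h t : ℂ)) f = (q : ℂ) := by
  let φ (i : ι) (n : ℕ) : ContDiffBump (p i) :=
    ⟨1 / (n + 1) / 2, 1 / (n + 1), by positivity, half_lt_self (by positivity)⟩
  have hφ (i : ι) : Tendsto (fun n => (φ i n).rOut) atTop (𝓝 0) :=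
    tendsto_one_div_add_atTop_nhds_zero_nat
  have hsmall : ∀ᶠ n in atTop, ∀ i ∈ S, (φ i n).rOut < p i :=
    (eventually_all_finset S).2 fun i hi => (hφ i).eventually_lt_const (hp i hi)
  obtain ⟨n, hn, hmem⟩ := (hsmall.and
    ((tendsto_hankelBilin_sum_bump hh c hp fun i _ => hφ i).eventually_mem hU)).exists
  exact ⟨_, isTestFun_sum_bump c (φ · n) hn, _, hmem, hankelQF_ofReal h _⟩

theorem exists_hankelQF_pos (hh : ContinuousOn h (Set.Ioi 0)) (hx : 0 < x)
    (hpos : 0 < h (x + x)) :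
    ∃ f, IsTestFun f ∧ 0 < hankelQF (fun t => (h t : ℂ)) f := by
  obtain ⟨f, hf, q, hq, hQ⟩ := exists_isTestFun_hankelQF_mem_of_mem_nhds (S := {()})
    (p := fun _ => x) hh 1 (fun _ _ => hx) (Ioi_mem_nhds (by simpa using hpos))
  exact ⟨f, hf, hQ ▸ Complex.zero_lt_real.2 hq⟩

theorem exists_hankelQF_neg (hh : ContinuousOn h (Set.Ioi 0)) (hx : 0 < x) (hy : 0 < y)
    (hpos : 0 < h (x + x)) (hdet : h (x + x) * h (y + y) < h (x + y) ^ 2) :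
    ∃ f, IsTestFun f ∧ hankelQF (fun t => (h t : ℂ)) f < 0 := by
  let c : Fin 2 → ℝ := ![h (x + y), -h (x + x)]
  let p : Fin 2 → ℝ := ![x, y]
  have hsum : ∑ i, ∑ j, c i * c j * h (p i + p j) =
      h (x + x) * (h (x + x) * h (y + y) - h (x + y) ^ 2) := by
    simp only [c, p, Fin.sum_univ_two, Matrix.cons_val_zero, Matrix.cons_val_one, add_comm y x]
    ring
  have hneg : ∑ i, ∑ j, c i * c j * h (p i + p j) < 0 :=
    hsum ▸ mul_neg_of_pos_of_neg hpos (sub_neg.2 hdet)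
  have hp : ∀ i ∈ Finset.univ, 0 < p i := fun i _ => by fin_cases i <;> assumption
  obtain ⟨f, hf, q, hq, hQ⟩ :=
    exists_isTestFun_hankelQF_mem_of_mem_nhds hh c hp (Iio_mem_nhds hneg)
  exact ⟨f, hf, hQ ▸ Complex.real_lt_real.2 hq⟩

end Bump

section PowerExp

lemma continuousOn_rpow_mul_exp (α k : ℝ) :
    ContinuousOn (fun t : ℝ => t ^ k * Real.exp (-α * t)) (Set.Ioi 0) :=
  (continuousOn_id.rpow_const fun _ ht => .inl (ne_of_gt ht)).mul (by fun_prop)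

lemma rpow_mul_exp_mul_lt_sq (α : ℝ) {k x y : ℝ} (hk : 0 < k) (hx : 0 < x) (hy : 0 < y)
    (hxy : x ≠ y) :
    (x + x) ^ k * Real.exp (-α * (x + x)) * ((y + y) ^ k * Real.exp (-α * (y + y))) <
      ((x + y) ^ k * Real.exp (-α * (x + y))) ^ 2 := by
  have amgm : (x + x) * (y + y) < (x + y) * (x + y) := by
    linarith [mul_self_pos.2 (sub_ne_zero.2 hxy)]
  have hrpow : (x + x) ^ k * (y + y) ^ k < (x + y) ^ k * (x + y) ^ k := by
    rw [← Real.mul_rpow (by positivity) (by positivity),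
      ← Real.mul_rpow (by positivity) (by positivity)]
    exact Real.rpow_lt_rpow (by positivity) amgm hk
  have hexp : Real.exp (-α * (x + x)) * Real.exp (-α * (y + y)) =
      Real.exp (-α * (x + y)) * Real.exp (-α * (x + y)) := by
    rw [← Real.exp_add, ← Real.exp_add]
    ring_nf
  rw [sq, mul_mul_mul_comm ((x + x) ^ k), mul_mul_mul_comm ((x + y) ^ k), hexp]
  exact mul_lt_mul_of_pos_right hrpow (by positivity)

end PowerExp

theorem hankel_power_exp_kernel_general (α k : ℝ) :
    (k ≤ 0 → ∀ f : ℝ → ℂ, IsTestFun f →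
      0 ≤ hankelQF (fun t : ℝ => ((t ^ k * Real.exp (-α * t) : ℝ) : ℂ)) f)
    ∧ (0 < k →
      (∃ fp : ℝ → ℂ, IsTestFun fp ∧
        0 < hankelQF (fun t : ℝ => ((t ^ k * Real.exp (-α * t) : ℝ) : ℂ)) fp) ∧
      (∃ fm : ℝ → ℂ, IsTestFun fm ∧
        hankelQF (fun t : ℝ => ((t ^ k * Real.exp (-α * t) : ℝ) : ℂ)) fm < 0)) := by
  have hcont := continuousOn_rpow_mul_exp α k
  have hpos : 0 < (1 + 1 : ℝ) ^ k * Real.exp (-α * (1 + 1)) := by positivity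
  refine ⟨fun hk f hf => hf.hankelQF_rpow_mul_exp_nonneg hk, fun hk => ⟨?_, ?_⟩⟩
  · exact exists_hankelQF_pos hcont one_pos hpos
  · exact exists_hankelQF_neg hcont one_pos two_pos hpos
      (rpow_mul_exp_mul_lt_sq α hk one_pos two_pos (by norm_num))

/-- The Hankel form with kernel `h(t) = t^k e^{-αt}` (`α > 0`, `k ≥ -1`) is positive
iff `k ≤ 0`; for `k > 0` it is not sign-definite. -/
theorem hankel_power_exp_kernel (α k : ℝ) (hα : 0 < α) (hk : -1 ≤ k) :
    ((k ≤ 0) → ∀ f : ℝ → ℂ, IsTestFun f →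
      0 ≤ hankelQF (fun t : ℝ => ((t ^ k * Real.exp (-α * t) : ℝ) : ℂ)) f)
    ∧ ((0 < k) →
      (∃ fp : ℝ → ℂ, IsTestFun fp ∧
        0 < hankelQF (fun t : ℝ => ((t ^ k * Real.exp (-α * t) : ℝ) : ℂ)) fp) ∧
      (∃ fm : ℝ → ℂ, IsTestFun fm ∧
        hankelQF (fun t : ℝ => ((t ^ k * Real.exp (-α * t) : ℝ) : ℂ)) fm < 0)) :=
  hankel_power_exp_kernel_general α k
end
end

section
/- Let α₁, …, α_M be pairwise distinct complex numbers with Re α_m > 0 and P₁, …, P_M nonzero polynomials with complex coefficients such that v(t) = Σ_{m=1}^M P_m(t) e^{-α_m t} is real-valued for t > 0 (so the Hankel operator with kernel v has finite rank). Set h(t) = t^{-1} + v(t), the kernel of the Carleman operator perturbed by v. Then N₋(Q_h) = N₋(Q_v). In particular, Q_h[f] ≥ 0 for all f ∈ C_c^∞((0,∞)) if and only if Q_v[f] ≥ 0 for all f ∈ C_c^∞((0,∞)). -/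
open MeasureTheory
open scoped ComplexOrder

noncomputable section

/-- A finite-rank (real) kernel `v(t) = Σ_m P_m(t) e^{-α_m t}`. -/
def finiteRankKernel (M : ℕ) (α : ℕ → ℂ) (P : ℕ → Polynomial ℂ) : ℝ → ℂ :=
  fun t : ℝ => ∑ m ∈ Finset.range M, (P m).eval (t : ℂ) * Complex.exp (-(α m) * t)

/-! The kernel `t⁻¹` is the Laplace transform of Lebesgue measure on `(0, ∞)`, so its Hankel form is
`‖Lf‖²`, where `L` is the Laplace transform with values in `L²(0, ∞)`; adding it can only destroy
negative squares. Conversely, the kernel of the form `Q_v` of a finite-rank `v` contains some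
`u ≠ 0`, and with `u` all its translates to the right, because a Hankel form does not see which of
its two arguments is translated. The Laplace transforms of these translates are `e^{-nl} (Lu)(l)`.
They span a dense subspace of `L²`: by the Weierstrass theorem a function orthogonal to all of them
vanishes almost everywhere, as `Lu` is analytic and not identically zero. A negative subspace of
`Q_v` can therefore be moved along the kernel of `Q_v`, which leaves `Q_v` unchanged, until
`‖Lf‖²` is too small to compensate the negativity of `Q_v`. -/

open Filter Set Topology TopologicalSpace
open scoped ComplexConjugate Distributions NNReal

section NegativeSubspaces

variable {𝕜 V H : Type*} [RCLike 𝕜] [AddCommGroup V] [Module 𝕜 V]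
  [NormedAddCommGroup H] [NormedSpace 𝕜 H]

theorem exists_linearMap_mem_norm_map_sub_le {F : Type*} [NormedAddCommGroup F]
    [NormedSpace 𝕜 F] [FiniteDimensional 𝕜 F] (q : V →ₗ[𝕜] H) (K : Submodule 𝕜 V)
    (S : F →ₗ[𝕜] V) (hS : ∀ x, q (S x) ∈ (K.map q).topologicalClosure) {ε : ℝ} (hε : 0 < ε) :
    ∃ U : F →ₗ[𝕜] V, (∀ x, U x ∈ K) ∧ ∀ x, ‖q (S x - U x)‖ ≤ ε * ‖x‖ := by
  let b := Module.finBasis 𝕜 F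
  obtain ⟨C, hC, hbound⟩ := b.exists_opNorm_le (F := H)
  have happrox (i) : ∃ u ∈ K, ‖q (S (b i) - u)‖ < ε / C := by
    obtain ⟨_, ⟨u, hu, rfl⟩, hlt⟩ := Metric.mem_closure_iff.1 (hS (b i)) (ε / C) (by positivity)
    exact ⟨u, hu, by rwa [map_sub, ← dist_eq_norm]⟩
  choose u hu hlt using happrox
  let U : F →ₗ[𝕜] V := b.constr 𝕜 u
  have hU (i) : U (b i) = u i := b.constr_basis 𝕜 u i
  let T : F →L[𝕜] H := LinearMap.toContinuousLinearMap (q ∘ₗ (S - U))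
  have hT : ‖T‖ ≤ ε := by
    refine (hbound (by positivity) fun i => ?_).trans_eq (mul_div_cancel₀ ε hC.ne')
    simpa [T, hU] using (hlt i).le
  refine ⟨U, fun x => ?_, fun x => T.le_of_opNorm_le hT x⟩
  rw [← b.sum_repr x, map_sum]
  exact K.sum_mem fun i _ => by simpa [hU] using K.smul_mem _ (hu i)

/-- A Hermitian form that is negative definite on `L` makes `L` an inner product space, with
`⟪x, y⟫ = -B x y`. -/
abbrev negInnerCore {B : V →ₗ⋆[𝕜] V →ₗ[𝕜] 𝕜} (hB : B.IsSymm) {L : Submodule 𝕜 V}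
    (hL : ∀ f ∈ L, f ≠ 0 → B f f < 0) : InnerProductSpace.Core 𝕜 L where
  inner x y := -B x y
  conj_inner_symm x y := by rw [map_neg, hB.eq]
  re_inner_nonneg x := by
    rcases eq_or_ne x 0 with rfl | hx
    · simp
    · have := (RCLike.neg_iff.1 (hL x x.2 (by simpa using hx))).1
      simpa using this.le
  add_left x y z := by simp [add_comm]
  smul_left x y c := by simp
  definite x hx := by
    by_contra hx0
    exact (hL x x.2 (by simpa using hx0)).ne (neg_eq_zero.1 hx)

theorem exists_submodule_finrank_eq_norm_sq_add_neg {B : V →ₗ⋆[𝕜] V →ₗ[𝕜] 𝕜} (hB : B.IsSymm)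
    {q : V →ₗ[𝕜] H}
    (hq : LinearMap.range q ≤ ((LinearMap.ker B).map q).topologicalClosure)
    (L : Submodule 𝕜 V) [FiniteDimensional 𝕜 L] (hL : ∀ f ∈ L, f ≠ 0 → B f f < 0) :
    ∃ L' : Submodule 𝕜 V, FiniteDimensional 𝕜 L' ∧
      Module.finrank 𝕜 L' = Module.finrank 𝕜 L ∧
      ∀ f ∈ L', f ≠ 0 → (‖q f‖ : 𝕜) ^ 2 + B f f < 0 := by
  let : InnerProductSpace.Core 𝕜 L := negInnerCore hB hL
  let : NormedAddCommGroup L := InnerProductSpace.Core.toNormedAddCommGroup (𝕜 := 𝕜)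
  let : InnerProductSpace 𝕜 L := InnerProductSpace.ofCore _
  obtain ⟨U, hU, hUle⟩ := exists_linearMap_mem_norm_map_sub_le q (LinearMap.ker B) L.subtype
    (fun x => hq ⟨x, rfl⟩) one_half_pos
  -- `T` differs from the inclusion by elements of the kernel of `B`, and makes `q` small.
  set T : L →ₗ[𝕜] V := L.subtype - U with hT
  have hBT (x : L) : B (T x) (T x) = -(‖x‖ : 𝕜) ^ 2 := by
    have hUB : B (U x) = 0 := hU x
    have hBU : B x (U x) = 0 := hB.eq_iff.1 (by rw [hUB, LinearMap.zero_apply])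
    have hnorm : (‖x‖ : 𝕜) ^ 2 = -B x x := (inner_self_eq_norm_sq_to_K x).symm
    simp [hT, hUB, hBU, hnorm]
  have hlt (x : L) (hx : x ≠ 0) : (‖q (T x)‖ : 𝕜) ^ 2 + B (T x) (T x) < 0 := by
    have h : ‖q (T x)‖ ≤ 1 / 2 * ‖x‖ := hUle x
    have hx' : 0 < ‖x‖ := norm_pos_iff.2 hx
    have : ‖q (T x)‖ ^ 2 - ‖x‖ ^ 2 < 0 := by nlinarith [norm_nonneg (q (T x))]
    rw [hBT, ← sub_eq_add_neg]
    exact_mod_cast this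
  have hinj : Function.Injective T := (injective_iff_map_eq_zero T).2 fun x hx => by
    simpa [hx] using (hBT x).symm
  refine ⟨LinearMap.range T, inferInstance, LinearMap.finrank_range_of_inj hinj, ?_⟩
  rintro _ ⟨x, rfl⟩ hx
  exact hlt x fun h => hx (by rw [h, map_zero])

end NegativeSubspaces

section ExponentialMoments

variable {E : Type*} [NormedAddCommGroup E] [NormedSpace ℝ E]

theorem integral_comp_smul_eq_zero_of_forall_integral_pow_smul_eq_zero {Ω : Type*}
    [MeasurableSpace Ω] {μ : Measure Ω} {X : Ω → ℝ} (hX : AEStronglyMeasurable X μ) {a b : ℝ}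
    (hab : ∀ᵐ x ∂μ, X x ∈ Icc a b) {w : Ω → E} (hw : Integrable w μ)
    (h : ∀ n : ℕ, ∫ x, X x ^ n • w x ∂μ = 0) {f : ℝ → ℝ} (hf : Continuous f) :
    ∫ x, f (X x) • w x ∂μ = 0 := by
  have hint {g : ℝ → ℝ} (hg : Continuous g) : Integrable (fun x => g (X x) • w x) μ := by
    obtain ⟨C, hC⟩ := isCompact_Icc.exists_bound_of_continuousOn hg.continuousOn
    exact hw.bdd_smul C (hg.comp_aestronglyMeasurable hX) (hab.mono fun x hx => hC _ hx)
  have hpoly (p : Polynomial ℝ) : ∫ x, p.eval (X x) • w x ∂μ = 0 := by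
    simp only [Polynomial.eval_eq_sum_range, Finset.sum_smul, mul_smul]
    rw [integral_finsetSum]
    · exact Finset.sum_eq_zero fun i _ => by rw [integral_smul, h, smul_zero]
    · exact fun i _ => (hint (continuous_pow i)).fun_smul _
  set A := ∫ x, ‖w x‖ ∂μ
  have : 0 ≤ A := integral_nonneg fun _ => norm_nonneg _
  rw [← norm_le_zero_iff]
  refine le_of_forall_pos_le_add fun ε hε => ?_
  obtain ⟨p, hp⟩ := exists_polynomial_near_of_continuousOn a b f hf.continuousOn (ε / (A + 1))
    (by positivity)
  calc ‖∫ x, f (X x) • w x ∂μ‖ = ‖∫ x, (f (X x) - p.eval (X x)) • w x ∂μ‖ := by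
        simp only [sub_smul]
        rw [integral_sub (hint hf) (hint p.continuous), hpoly, sub_zero]
    _ ≤ ∫ x, ε / (A + 1) * ‖w x‖ ∂μ := by
        refine norm_integral_le_of_norm_le (hw.norm.const_mul _) (hab.mono fun x hx => ?_)
        rw [norm_smul, norm_sub_rev, Real.norm_eq_abs]
        gcongr
        exact (hp _ hx).le
    _ = ε / (A + 1) * A := integral_const_mul _ _
    _ ≤ 0 + ε := by
        rw [zero_add, div_mul_eq_mul_div, div_le_iff₀ (by positivity)]
        nlinarith

theorem continuous_extend_zero_of_isOpenEmbedding {X Y Z : Type*} [TopologicalSpace X]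
    [TopologicalSpace Y] [T2Space Y] [TopologicalSpace Z] [Zero Z] {e : X → Y}
    (he : IsOpenEmbedding e) {g : X → Z} (hg : Continuous g) (hgc : HasCompactSupport g) :
    Continuous (e.extend g 0) := by
  refine continuous_of_tsupport fun y hy => ?_
  obtain ⟨x, -, rfl⟩ := hgc.tsupport_extend_zero_subset he.continuous hy
  rw [← he.continuousAt_iff, Function.extend_comp he.injective]
  exact hg.continuousAt

theorem ae_eq_zero_of_forall_integral_pow_smul_eq_zero [CompleteSpace E] {μ : Measure ℝ}
    {e : ℝ → ℝ} (he : IsOpenEmbedding e) {a b : ℝ} (hab : ∀ᵐ x ∂μ, e x ∈ Icc a b) {w : ℝ → E}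
    (hw : Integrable w μ) (h : ∀ n : ℕ, ∫ x, e x ^ n • w x ∂μ = 0) : ∀ᵐ x ∂μ, w x = 0 := by
  refine ae_eq_zero_of_integral_contDiff_smul_eq_zero hw.locallyIntegrable fun g hg hgc => ?_
  simpa only [he.injective.extend_apply] using
    integral_comp_smul_eq_zero_of_forall_integral_pow_smul_eq_zero
      he.continuous.aestronglyMeasurable hab hw h
      (continuous_extend_zero_of_isOpenEmbedding he hg.continuous hgc)

theorem ae_eq_zero_of_forall_integral_exp_neg_nat_mul_smul_eq_zero [CompleteSpace E]
    {μ : Measure ℝ} (hμ : ∀ᵐ x ∂μ, 0 ≤ x) {w : ℝ → E} (hw : Integrable w μ)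
    (h : ∀ n : ℕ, ∫ x, Real.exp (-(n * x)) • w x ∂μ = 0) : ∀ᵐ x ∂μ, w x = 0 := by
  have he : IsOpenEmbedding fun x : ℝ => Real.exp (-x) :=
    Real.isOpenEmbedding_exp.comp (Homeomorph.neg ℝ).isOpenEmbedding
  refine ae_eq_zero_of_forall_integral_pow_smul_eq_zero he (a := 0) (b := 1)
    (hμ.mono fun x hx => ⟨by positivity, by simpa using hx⟩) hw fun n => ?_
  simpa only [← Real.exp_nat_mul, mul_neg] using h n

end ExponentialMoments

section TestFunctions

/-- The open half-line `(0, ∞)` on which the test functions are supported. -/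
abbrev halfLine : Opens ℝ := ⟨Ioi 0, isOpen_Ioi⟩

theorem isTestFun_coe (f : 𝓓(halfLine, ℂ)) : IsTestFun f :=
  ⟨f.contDiff, f.hasCompactSupport, f.tsupport_subset⟩

instance : CanLift (ℝ → ℂ) 𝓓(halfLine, ℂ) (⇑) IsTestFun where
  prf f hf := ⟨⟨f, hf.1, hf.2.1, hf.2.2⟩, rfl⟩

theorem testFunction_eq_zero_of_nonpos (f : 𝓓(halfLine, ℂ)) {t : ℝ} (ht : t ≤ 0) : f t = 0 :=
  image_eq_zero_of_notMem_tsupport fun h => ht.not_gt (f.tsupport_subset h)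

theorem integrable_mul_testFunction {b : ℝ → ℂ} (hb : Continuous b) (f : 𝓓(halfLine, ℂ)) :
    Integrable fun t => b t * f t :=
  (hb.mul f.continuous).integrable_of_hasCompactSupport f.hasCompactSupport.mul_left

/-- Translation to the right by `τ ≥ 0`, which preserves test functions on the half-line. -/
def rightShift (τ : ℝ≥0) : 𝓓(halfLine, ℂ) →ₗ[ℂ] 𝓓(halfLine, ℂ) where
  toFun f :=
    { toFun := fun t => f (t - τ)
      contDiff' := f.contDiff.comp (contDiff_id.sub contDiff_const)
      hasCompactSupport' := f.hasCompactSupport.comp_homeomorph (Homeomorph.subRight (τ : ℝ))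
      tsupport_subset' := by
        refine (tsupport_comp_eq_preimage f (Homeomorph.subRight (τ : ℝ))).trans_subset ?_
        intro t ht
        exact τ.2.trans_lt (sub_pos.1 (f.tsupport_subset ht)) }
  map_add' _ _ := rfl
  map_smul' _ _ := rfl

@[simp]
theorem rightShift_apply (τ : ℝ≥0) (f : 𝓓(halfLine, ℂ)) (t : ℝ) :
    rightShift τ f t = f (t - τ) :=
  rfl

instance : Nontrivial 𝓓(halfLine, ℂ) := by
  obtain ⟨f, hsupp, hcomp, hsmooth, -, hf⟩ :=
    exists_contDiff_tsupport_subset (n := ⊤) (Ioi_mem_nhds (zero_lt_one' ℝ))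
  refine ⟨⟨⟨Complex.ofRealCLM ∘ f, Complex.ofRealCLM.contDiff.comp hsmooth,
    hcomp.comp_left (map_zero _), (tsupport_comp_subset (map_zero _) f).trans hsupp⟩, 0, ?_⟩⟩
  intro h
  simpa [hf] using DFunLike.congr_fun h 1

theorem eq_zero_of_rightShift_one_eq_smul {f : 𝓓(halfLine, ℂ)} {c : ℂ}
    (h : rightShift 1 f = c • f) : f = 0 := by
  have hiter (n : ℕ) (t : ℝ) : f t = c ^ n * f (t + n) := by
    induction n with
    | zero => simp
    | succ n ih =>
      have := DFunLike.congr_fun h (t + (n + 1 : ℕ))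
      simp only [rightShift_apply, smul_apply, smul_eq_mul] at this
      rw [ih, pow_succ, mul_assoc, ← this]
      congr 2
      push_cast
      ring
  ext t
  have hvanish : ∀ᶠ x in atTop, f x = 0 := by
    have := hasCompactSupport_iff_eventuallyEq.1 f.hasCompactSupport
    rw [coclosedCompact_eq_cocompact] at this
    exact this.filter_mono atTop_le_cocompact
  have htend : Tendsto (fun n : ℕ => t + n) atTop atTop :=
    tendsto_atTop_add_const_left _ t tendsto_natCast_atTop_atTop
  obtain ⟨n, hn⟩ := (htend.eventually hvanish).exists
  rw [hiter n, hn, mul_zero, zero_apply]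

theorem not_finiteDimensional_testFunction : ¬ FiniteDimensional ℂ 𝓓(halfLine, ℂ) := fun _ => by
  obtain ⟨c, hc⟩ := Module.End.exists_eigenvalue (rightShift 1)
  obtain ⟨f, hf⟩ := hc.exists_hasEigenvector
  exact hf.2 (eq_zero_of_rightShift_one_eq_smul hf.apply_eq_smul)

theorem exists_ne_zero_forall_integral_mul_eq_zero {ι : Type*} [Finite ι] {b : ι → ℝ → ℂ}
    (hb : ∀ i, Continuous (b i)) :
    ∃ u : 𝓓(halfLine, ℂ), u ≠ 0 ∧ ∀ i, ∫ t, b i t * u t = 0 := by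
  let Φ : 𝓓(halfLine, ℂ) →ₗ[ℂ] ι → ℂ := LinearMap.pi fun i =>
    { toFun := fun f => ∫ t, b i t * f t
      map_add' := fun f g => by
        simp only [add_apply, mul_add]
        exact integral_add (integrable_mul_testFunction (hb i) f)
          (integrable_mul_testFunction (hb i) g)
      map_smul' := fun c f => by
        simp only [smul_apply, smul_eq_mul, mul_left_comm _ c]
        exact integral_const_mul c _ }
  have hΦ : LinearMap.ker Φ ≠ ⊥ := fun h =>
    not_finiteDimensional_testFunction (.of_injective Φ (LinearMap.ker_eq_bot.1 h))
  obtain ⟨u, hu, hu0⟩ := Submodule.exists_mem_ne_zero_of_ne_bot hΦ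
  exact ⟨u, hu0, congr_fun hu⟩

end TestFunctions

section LaplaceTransform

/-- The Laplace transform `z ↦ ∫ e^{-zt} f(t) dt`. The integral runs over the whole line, since
it is only applied to functions that vanish on `(-∞, 0]`. -/
def laplace (f : ℝ → ℂ) (z : ℂ) : ℂ := ∫ t : ℝ, Complex.exp (-(z * t)) * f t

theorem differentiable_laplace {f : ℝ → ℂ} (hf : Continuous f) (hfc : HasCompactSupport f) :
    Differentiable ℂ (laplace f) := fun z₀ => by
  have hderiv (t : ℝ) (z : ℂ) : HasDerivAt (fun z : ℂ => Complex.exp (-(z * t)) * f t)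
      (Complex.exp (-(z * t)) * -t * f t) z := by
    simpa using (((hasDerivAt_id z).mul_const (t : ℂ)).neg.cexp).mul_const (f t)
  have hbound (t : ℝ) (z : ℂ) (hz : z ∈ Metric.ball z₀ 1) :
      ‖Complex.exp (-(z * t)) * -t * f t‖ ≤ Real.exp ((‖z₀‖ + 1) * |t|) * |t| * ‖f t‖ := by
    have hz' : ‖z‖ ≤ ‖z₀‖ + 1 := by
      linarith [norm_sub_norm_le z z₀, mem_ball_iff_norm.1 hz]
    rw [norm_mul, norm_mul, norm_neg, Complex.norm_real, Real.norm_eq_abs]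
    gcongr
    refine (Complex.norm_exp_le_exp_norm _).trans (Real.exp_le_exp.2 ?_)
    rw [norm_neg, norm_mul, Complex.norm_real, Real.norm_eq_abs]
    gcongr
  refine (hasDerivAt_integral_of_dominated_loc_of_deriv_le (Metric.ball_mem_nhds z₀ one_pos)
    (.of_forall fun z => ?_) ?_ ?_ (.of_forall hbound) ?_
    (.of_forall fun t z _ => hderiv t z)).2.differentiableAt
  · exact Continuous.aestronglyMeasurable (by fun_prop)
  · exact Continuous.integrable_of_hasCompactSupport (by fun_prop) hfc.mul_left
  · exact Continuous.aestronglyMeasurable (by fun_prop)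
  · exact Continuous.integrable_of_hasCompactSupport (by fun_prop) hfc.norm.mul_left

theorem laplace_rightShift (τ : ℝ≥0) (f : 𝓓(halfLine, ℂ)) (z : ℂ) :
    laplace (rightShift τ f) z = Complex.exp (-(z * τ)) * laplace f z := by
  rw [laplace, ← integral_add_right_eq_self _ (τ : ℝ), laplace, ← integral_const_mul]
  refine integral_congr_ae (.of_forall fun t => ?_)
  simp only [rightShift_apply, add_sub_cancel_right, ← mul_assoc, ← Complex.exp_add]
  congr 2
  push_cast
  ring

theorem exists_norm_laplace_le (f : 𝓓(halfLine, ℂ)) :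
    ∃ a > 0, ∃ C : ℝ, ∀ l : ℝ, 0 ≤ l → ‖laplace f l‖ ≤ C * Real.exp (-a * l) := by
  obtain ⟨a, ha, hsupp⟩ : ∃ a > 0, ∀ t ∈ tsupport f, a ≤ t :=
    f.hasCompactSupport.exists_forall_le' continuousOn_id f.tsupport_subset
  refine ⟨a, ha, ∫ t, ‖f t‖, fun l hl => ?_⟩
  rw [mul_comm, ← integral_const_mul]
  refine norm_integral_le_of_norm_le ((f.continuous.integrable_of_hasCompactSupport
    f.hasCompactSupport).norm.const_mul _) (.of_forall fun t => ?_)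
  by_cases ht : t ∈ tsupport f
  · rw [norm_mul, Complex.norm_exp]
    gcongr
    simpa [mul_comm] using mul_le_mul_of_nonneg_right (hsupp t ht) hl
  · simp [image_eq_zero_of_notMem_tsupport ht]

theorem exists_laplace_nat_ne_zero {f : 𝓓(halfLine, ℂ)} (hf : f ≠ 0) :
    ∃ n : ℕ, laplace f n ≠ 0 := by
  contrapose! hf
  have hint : Integrable f (volume.restrict (Ioi 0)) :=
    (f.continuous.integrable_of_hasCompactSupport f.hasCompactSupport).restrict
  have hae : f =ᵐ[volume.restrict (Ioi 0)] 0 := by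
    refine ae_eq_zero_of_forall_integral_exp_neg_nat_mul_smul_eq_zero
      ((ae_restrict_mem measurableSet_Ioi).mono fun _ => le_of_lt) hint fun n => ?_
    rw [setIntegral_eq_integral_of_forall_compl_eq_zero fun t ht => by
      rw [testFunction_eq_zero_of_nonpos f (not_lt.1 ht), smul_zero], ← hf n]
    simp [laplace]
  ext t
  rcases le_or_gt t 0 with ht | ht
  · exact testFunction_eq_zero_of_nonpos f ht
  · exact Measure.eqOn_open_of_ae_eq hae isOpen_Ioi f.continuous.continuousOn
      continuousOn_const ht

theorem ae_laplace_ne_zero (μ : Measure ℝ) [NullSingletonClass μ] {f : 𝓓(halfLine, ℂ)}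
    (hf : f ≠ 0) : ∀ᵐ l : ℝ ∂μ, laplace f l ≠ 0 := by
  have han : AnalyticOnNhd ℝ (fun l : ℝ => laplace f l) univ := fun l _ =>
    ((differentiable_laplace f.continuous f.hasCompactSupport).analyticAt l).restrictScalars.comp
      (Complex.ofRealCLM.analyticAt l)
  obtain ⟨n, hn⟩ := exists_laplace_nat_ne_zero hf
  have := ae_restrict_le_codiscreteWithin (μ := μ) MeasurableSet.univ
    (han.preimage_zero_mem_codiscrete (x := n) (by simpa using hn))
  rwa [Measure.restrict_univ] at this

end LaplaceTransform

section LaplaceMeasures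

open ProbabilityTheory

/-- Measures on `[0, ∞)` whose Laplace transform converges on `(0, ∞)`. -/
class IsLaplaceMeasure (μ : Measure ℝ) : Prop where
  ae_nonneg : ∀ᵐ l ∂μ, 0 ≤ l
  integrable_exp_neg_mul : ∀ a > 0, Integrable (fun l => Real.exp (-a * l)) μ

instance : IsLaplaceMeasure (volume.restrict (Ioi 0)) where
  ae_nonneg := (ae_restrict_mem measurableSet_Ioi).mono fun _ hl => le_of_lt hl
  integrable_exp_neg_mul _ := exp_neg_integrableOn_Ioi 0

variable (μ : Measure ℝ)

/-- The Laplace transform `t ↦ ∫ e^{-tl} dμ(l)` of a measure, as a Hankel kernel. -/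
def laplaceKernel (t : ℝ) : ℂ := mgf id μ (-t)

theorem laplaceKernel_eq_integral (t : ℝ) :
    laplaceKernel μ t = ∫ l, (Real.exp (-t * l) : ℂ) ∂μ :=
  integral_ofReal.symm

theorem norm_laplaceKernel (t : ℝ) : ‖laplaceKernel μ t‖ = ∫ l, Real.exp (-t * l) ∂μ := by
  rw [laplaceKernel, Complex.norm_real, Real.norm_of_nonneg mgf_nonneg]
  rfl

theorem laplaceKernel_volume_restrict_Ioi {t : ℝ} (ht : 0 < t) :
    laplaceKernel (volume.restrict (Ioi 0)) t = (t⁻¹ : ℝ) := by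
  simp only [laplaceKernel, mgf, id, integral_exp_mul_Ioi (neg_neg_of_pos ht)]
  simp

variable [IsLaplaceMeasure μ]

instance : IsLocallyFiniteMeasure μ where
  finiteAtNhds x := by
    refine ⟨Iic (x + 1), Iic_mem_nhds (lt_add_one x), ?_⟩
    have := (IsLaplaceMeasure.integrable_exp_neg_mul (μ := μ) 1 one_pos).measure_norm_ge_lt_top
      (Real.exp_pos (-(x + 1)))
    simpa [Iic_def] using this

theorem continuousOn_laplaceKernel : ContinuousOn (laplaceKernel μ) (Ioi 0) := by
  have hsub : Iio 0 ⊆ interior (integrableExpSet id μ) := by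
    refine interior_maximal (fun t ht => ?_) isOpen_Iio
    simpa [integrableExpSet] using
      IsLaplaceMeasure.integrable_exp_neg_mul (μ := μ) (-t) (neg_pos.2 ht)
  exact Complex.continuous_ofReal.comp_continuousOn
    ((continuousOn_mgf.mono hsub).comp continuousOn_neg fun t ht => by simpa using ht)

theorem memLp_two_laplace (f : 𝓓(halfLine, ℂ)) : MemLp (fun l : ℝ => laplace f l) 2 μ := by
  obtain ⟨a, ha, C, hC⟩ := exists_norm_laplace_le f
  have hexp : MemLp (fun l => Real.exp (-a * l)) 2 μ := by
    refine (memLp_two_iff_integrable_sq (by fun_prop)).2 ?_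
    refine (IsLaplaceMeasure.integrable_exp_neg_mul (μ := μ) (2 * a) (by positivity)).congr
      (.of_forall fun l => ?_)
    simp only [← Real.exp_nat_mul]
    ring_nf
  have hcont : Continuous fun l : ℝ => laplace f l :=
    (differentiable_laplace f.continuous f.hasCompactSupport).continuous.comp
      Complex.continuous_ofReal
  refine hexp.of_le_mul hcont.aestronglyMeasurable (c := C) ?_
  filter_upwards [IsLaplaceMeasure.ae_nonneg (μ := μ)] with l hl
  simpa using hC l hl

/-- The Laplace transform of test functions as a map into `L²(μ)`. -/
def laplaceL2 : 𝓓(halfLine, ℂ) →ₗ[ℂ] Lp ℂ 2 μ where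
  toFun f := (memLp_two_laplace μ f).toLp
  map_add' f g := by
    rw [← MemLp.toLp_add]
    congr
    ext l
    simp only [laplace, Pi.add_apply, add_apply, mul_add]
    exact integral_add (integrable_mul_testFunction (by fun_prop) f)
      (integrable_mul_testFunction (by fun_prop) g)
  map_smul' c f := by
    rw [RingHom.id_apply, ← MemLp.toLp_const_smul]
    congr
    ext l
    simp only [laplace, Pi.smul_apply, smul_apply, smul_eq_mul, mul_left_comm _ c]
    exact integral_const_mul c _

theorem coeFn_laplaceL2 (f : 𝓓(halfLine, ℂ)) :
    laplaceL2 μ f =ᵐ[μ] fun l : ℝ => laplace f l :=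
  (memLp_two_laplace μ f).coeFn_toLp

theorem inner_laplaceL2_rightShift (n : ℕ) (f : 𝓓(halfLine, ℂ)) (g : Lp ℂ 2 μ) :
    inner ℂ (laplaceL2 μ (rightShift n f)) g =
      ∫ l, Real.exp (-(n * l)) • inner ℂ (laplaceL2 μ f l) (g l) ∂μ := by
  rw [L2.inner_def]
  refine integral_congr_ae ?_
  filter_upwards [coeFn_laplaceL2 μ f, coeFn_laplaceL2 μ (rightShift n f)] with l hf hshift
  rw [hf, hshift, laplace_rightShift, ← smul_eq_mul, inner_smul_left, ← Complex.exp_conj]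
  simp [mul_comm]

theorem topologicalClosure_map_laplaceL2_eq_top [NullSingletonClass μ]
    {K : Submodule ℂ 𝓓(halfLine, ℂ)} (hK : K ≠ ⊥)
    (hshift : ∀ τ, ∀ f ∈ K, rightShift τ f ∈ K) :
    (K.map (laplaceL2 μ)).topologicalClosure = ⊤ := by
  rw [Submodule.topologicalClosure_eq_top_iff, Submodule.eq_bot_iff]
  intro g hg
  obtain ⟨u, hu, hu0⟩ := Submodule.exists_mem_ne_zero_of_ne_bot hK
  have hae : ∀ᵐ l ∂μ, inner ℂ (laplaceL2 μ u l) (g l) = 0 := by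
    refine ae_eq_zero_of_forall_integral_exp_neg_nat_mul_smul_eq_zero IsLaplaceMeasure.ae_nonneg
      (L2.integrable_inner (𝕜 := ℂ) (laplaceL2 μ u) g) fun n => ?_
    rw [← inner_laplaceL2_rightShift]
    exact hg _ (Submodule.mem_map_of_mem (hshift n u hu))
  rw [Lp.eq_zero_iff_ae_eq_zero]
  filter_upwards [hae, coeFn_laplaceL2 μ u, ae_laplace_ne_zero μ hu0] with l hl hLu hne
  rw [hLu, RCLike.inner_apply] at hl
  simpa [hne] using hl

end LaplaceMeasures

section HankelForms

variable {h k : ℝ → ℂ}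

theorem mul_testFunction_mul_conj_eq_zero (c : ℂ) (g f : 𝓓(halfLine, ℂ)) {t s : ℝ}
    (hts : ¬ (0 < t ∧ 0 < s)) : c * f s * conj (g t) = 0 := by
  rcases not_and_or.1 hts with ht | hs
  · simp [testFunction_eq_zero_of_nonpos g (not_lt.1 ht)]
  · simp [testFunction_eq_zero_of_nonpos f (not_lt.1 hs)]

theorem integrable_hankelIntegrand (hh : ContinuousOn h (Ioi 0)) (g f : 𝓓(halfLine, ℂ)) :
    Integrable fun p : ℝ × ℝ => h (p.1 + p.2) * f p.2 * conj (g p.1) := by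
  have hzero (p : ℝ × ℝ) (hp : p ∉ tsupport g ×ˢ tsupport f) :
      h (p.1 + p.2) * f p.2 * conj (g p.1) = 0 := by
    rcases not_and_or.1 hp with h1 | h2
    · simp [image_eq_zero_of_notMem_tsupport h1]
    · simp [image_eq_zero_of_notMem_tsupport h2]
  have hcompact : IsCompact (tsupport g ×ˢ tsupport f) :=
    g.hasCompactSupport.prod f.hasCompactSupport
  refine (integrableOn_iff_integrable_of_support_subset fun p hp => ?_).1
    (ContinuousOn.integrableOn_compact hcompact ?_)
  · exact not_imp_comm.1 (hzero p) hp
  · have hadd : MapsTo (fun p : ℝ × ℝ => p.1 + p.2) (tsupport g ×ˢ tsupport f) (Ioi 0) :=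
      fun p hp => add_pos (mem_Ioi.1 (g.tsupport_subset hp.1)) (f.tsupport_subset hp.2)
    exact ((hh.comp (by fun_prop) hadd).mul (by fun_prop)).mul (by fun_prop)

variable (hh : ContinuousOn h (Ioi 0)) (hk : ContinuousOn k (Ioi 0))

/-- The sesquilinear Hankel form of a kernel that is continuous on `(0, ∞)`, conjugate-linear in
the first argument. The integral runs over the whole plane, since test functions vanish on
`(-∞, 0]`. -/
def hankelForm : 𝓓(halfLine, ℂ) →ₗ⋆[ℂ] 𝓓(halfLine, ℂ) →ₗ[ℂ] ℂ :=
  LinearMap.mk₂'ₛₗ (starRingEnd ℂ) (RingHom.id ℂ)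
    (fun g f => ∫ p : ℝ × ℝ, h (p.1 + p.2) * f p.2 * conj (g p.1))
    (fun g₁ g₂ f => by
      simp only [add_apply, map_add, mul_add]
      exact integral_add (integrable_hankelIntegrand hh g₁ f) (integrable_hankelIntegrand hh g₂ f))
    (fun c g f => by
      simp only [smul_apply, smul_eq_mul, map_mul, mul_left_comm _ (conj c)]
      exact integral_const_mul _ _)
    (fun g f₁ f₂ => by
      simp only [add_apply, mul_add, add_mul]
      exact integral_add (integrable_hankelIntegrand hh g f₁) (integrable_hankelIntegrand hh g f₂))
    (fun c g f => by
      simp only [smul_apply, smul_eq_mul, mul_left_comm _ c, mul_assoc]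
      exact integral_const_mul _ _)

theorem hankelForm_apply (g f : 𝓓(halfLine, ℂ)) :
    hankelForm hh g f = ∫ p : ℝ × ℝ, h (p.1 + p.2) * f p.2 * conj (g p.1) :=
  rfl

theorem hankelForm_apply_eq_integral_integral (g f : 𝓓(halfLine, ℂ)) :
    hankelForm hh g f = ∫ t, ∫ s, h (t + s) * f s * conj (g t) :=
  integral_prod _ (integrable_hankelIntegrand hh g f)

theorem hankelQF_eq_hankelForm (f : 𝓓(halfLine, ℂ)) : hankelQF h f = hankelForm hh f f := by
  rw [hankelForm_apply_eq_integral_integral, hankelQF]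
  have hinner (t : ℝ) : ∫ s in Ioi 0, h (t + s) * f s * conj (f t) =
      ∫ s, h (t + s) * f s * conj (f t) :=
    setIntegral_eq_integral_of_forall_compl_eq_zero fun s hs =>
      mul_testFunction_mul_conj_eq_zero _ f f fun hp => hs hp.2
  simp only [hinner]
  refine setIntegral_eq_integral_of_forall_compl_eq_zero fun t ht => ?_
  simp [testFunction_eq_zero_of_nonpos f (not_lt.1 ht)]

theorem hankelForm_add (g f : 𝓓(halfLine, ℂ)) :
    hankelForm (hh.add hk) g f = hankelForm hh g f + hankelForm hk g f := by
  simp only [hankelForm_apply, Pi.add_apply, add_mul]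
  exact integral_add (integrable_hankelIntegrand hh g f) (integrable_hankelIntegrand hk g f)

theorem isSymm_hankelForm (hreal : ∀ t, 0 < t → (h t).im = 0) : (hankelForm hh).IsSymm where
  eq g f := by
    rw [hankelForm_apply, hankelForm_apply, ← integral_conj, Measure.volume_eq_prod,
      ← integral_prod_swap]
    refine integral_congr_ae (.of_forall fun p => ?_)
    by_cases hp : 0 < p.1 ∧ 0 < p.2
    · have := Complex.conj_eq_iff_im.2 (hreal (p.1 + p.2) (add_pos hp.1 hp.2))
      simp [this, add_comm p.2, mul_right_comm]
    · simp only [Prod.fst_swap, Prod.snd_swap]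
      rw [mul_testFunction_mul_conj_eq_zero _ g f fun h => hp h.symm,
        mul_testFunction_mul_conj_eq_zero _ f g hp, map_zero]

theorem hankelForm_rightShift (τ : ℝ≥0) (g f : 𝓓(halfLine, ℂ)) :
    hankelForm hh (rightShift τ g) f = hankelForm hh g (rightShift τ f) := by
  rw [hankelForm_apply, ← integral_add_right_eq_self _ ((τ : ℝ), -(τ : ℝ)), hankelForm_apply]
  refine integral_congr_ae (.of_forall fun p => ?_)
  simp [← sub_eq_add_neg, add_add_sub_cancel]

theorem rightShift_mem_ker_hankelForm (τ : ℝ≥0) {g : 𝓓(halfLine, ℂ)}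
    (hg : g ∈ LinearMap.ker (hankelForm hh)) :
    rightShift τ g ∈ LinearMap.ker (hankelForm hh) := by
  ext1 f
  rw [hankelForm_rightShift, LinearMap.mem_ker.1 hg, LinearMap.zero_apply, LinearMap.zero_apply]

theorem integrable_laplaceIntegrand (μ : Measure ℝ) [IsLaplaceMeasure μ] (g f : 𝓓(halfLine, ℂ)) :
    Integrable (fun q : (ℝ × ℝ) × ℝ =>
      (Real.exp (-(q.1.1 + q.1.2) * q.2) : ℂ) * f q.1.2 * conj (g q.1.1)) (volume.prod μ) := by
  refine (integrable_prod_iff (Continuous.aestronglyMeasurable (by fun_prop))).2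
    ⟨.of_forall fun p => ?_, ?_⟩
  · by_cases hp : 0 < p.1 ∧ 0 < p.2
    · have hexp : Integrable (fun l => (Real.exp (-(p.1 + p.2) * l) : ℂ)) μ :=
        (IsLaplaceMeasure.integrable_exp_neg_mul _ (add_pos hp.1 hp.2)).ofReal
      exact (hexp.mul_const (f p.2)).mul_const (conj (g p.1))
    · simp only [mul_testFunction_mul_conj_eq_zero _ g f hp]
      exact integrable_zero ℝ ℂ μ
  · refine (integrable_hankelIntegrand (continuousOn_laplaceKernel μ) g f).norm.congr
      (.of_forall fun p => ?_)
    simp only [norm_mul, norm_laplaceKernel, Complex.norm_real, Real.norm_of_nonneg,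
      Real.exp_nonneg, integral_mul_const]

theorem hankelForm_laplaceKernel (μ : Measure ℝ) [IsLaplaceMeasure μ] (g f : 𝓓(halfLine, ℂ)) :
    hankelForm (continuousOn_laplaceKernel μ) g f = inner ℂ (laplaceL2 μ g) (laplaceL2 μ f) := by
  calc hankelForm (continuousOn_laplaceKernel μ) g f
      = ∫ p : ℝ × ℝ, ∫ l, (Real.exp (-(p.1 + p.2) * l) : ℂ) * f p.2 * conj (g p.1) ∂μ := by
        simp only [hankelForm_apply, integral_mul_const, laplaceKernel_eq_integral]
    _ = ∫ l, (∫ p : ℝ × ℝ, (Real.exp (-(p.1 + p.2) * l) : ℂ) * f p.2 * conj (g p.1)) ∂μ :=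
        integral_integral_swap (integrable_laplaceIntegrand μ g f)
    _ = ∫ l : ℝ, conj (laplace g l) * laplace f l ∂μ := by
        refine integral_congr_ae (.of_forall fun l => ?_)
        simp only [laplace, ← integral_conj]
        rw [← integral_prod_mul]
        refine integral_congr_ae (.of_forall fun p => ?_)
        have hexp : (Real.exp (-(p.1 + p.2) * l) : ℂ) =
            conj (Complex.exp (-(l * p.1))) * Complex.exp (-(l * p.2)) := by
          rw [← Complex.exp_conj, ← Complex.exp_add, Complex.ofReal_exp]
          congr 1
          simp only [map_neg, map_mul, Complex.conj_ofReal]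
          push_cast
          ring
        simp only [hexp, map_mul]
        ring
    _ = inner ℂ (laplaceL2 μ g) (laplaceL2 μ f) := by
        rw [L2.inner_def]
        refine integral_congr_ae ?_
        filter_upwards [coeFn_laplaceL2 μ g, coeFn_laplaceL2 μ f] with l hg hf
        rw [hg, hf, RCLike.inner_apply']

end HankelForms

section FiniteRankKernels

theorem ker_hankelForm_ne_bot_of_forall_eq_sum {h : ℝ → ℂ} (hh : ContinuousOn h (Ioi 0))
    (hreal : ∀ t, 0 < t → (h t).im = 0) {ι : Type*} [Fintype ι] {a b : ι → ℝ → ℂ}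
    (hb : ∀ i, Continuous (b i)) (hsum : ∀ t s, h (t + s) = ∑ i, a i t * b i s) :
    LinearMap.ker (hankelForm hh) ≠ ⊥ := by
  obtain ⟨u, hu0, hu⟩ := exists_ne_zero_forall_integral_mul_eq_zero hb
  refine Submodule.ne_bot_iff _ |>.2 ⟨u, ?_, hu0⟩
  ext1 g
  refine (isSymm_hankelForm hh hreal).eq_iff.1 ?_
  have hinner (t : ℝ) : ∫ s, h (t + s) * u s = 0 := by
    simp only [hsum, Finset.sum_mul, mul_assoc]
    rw [integral_finsetSum]
    · simp only [integral_const_mul, hu, mul_zero, Finset.sum_const_zero]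
    · exact fun i _ => (integrable_mul_testFunction (hb i) u).const_mul (a i t)
  simp [hankelForm_apply_eq_integral_integral, integral_mul_const, hinner]

variable (M : ℕ) (α : ℕ → ℂ) (P : ℕ → Polynomial ℂ)

theorem continuous_finiteRankKernel : Continuous (finiteRankKernel M α P) := by
  unfold finiteRankKernel
  fun_prop

theorem finiteRankKernel_add (t s : ℝ) :
    finiteRankKernel M α P (t + s) =
      ∑ i : Σ m : Fin M, Fin ((P m).natDegree + 1),
        (Polynomial.taylor (t : ℂ) (P i.1)).coeff i.2 * Complex.exp (-α i.1 * t) *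
          ((s : ℂ) ^ (i.2 : ℕ) * Complex.exp (-α i.1 * s)) := by
  rw [finiteRankKernel, Finset.sum_range, Fintype.sum_sigma]
  refine Finset.sum_congr rfl fun m _ => ?_
  rw [Complex.ofReal_add, add_comm (t : ℂ), ← Polynomial.taylor_eval,
    Polynomial.eval_eq_sum_range, Polynomial.natDegree_taylor, Finset.sum_range, Finset.sum_mul]
  refine Finset.sum_congr rfl fun k _ => ?_
  rw [mul_add, Complex.exp_add]
  ring

theorem ker_hankelForm_finiteRankKernel_ne_bot
    (hreal : ∀ t, 0 < t → (finiteRankKernel M α P t).im = 0) :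
    LinearMap.ker (hankelForm (continuous_finiteRankKernel M α P).continuousOn) ≠ ⊥ :=
  ker_hankelForm_ne_bot_of_forall_eq_sum _ hreal (fun _ => by fun_prop)
    (finiteRankKernel_add M α P)

end FiniteRankKernels

section NegativeCount

theorem negSubspace_iff_exists_submodule_testFunction {Q : (ℝ → ℂ) → ℂ} {N : ℕ} :
    negSubspace Q N ↔ ∃ L : Submodule ℂ 𝓓(halfLine, ℂ), FiniteDimensional ℂ L ∧
      Module.finrank ℂ L = N ∧ ∀ f ∈ L, f ≠ 0 → Q f < 0 := by
  let coe : 𝓓(halfLine, ℂ) →ₗ[ℂ] ℝ → ℂ :=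
    { toFun := (⇑), map_add' := fun _ _ => rfl, map_smul' := fun _ _ => rfl }
  have hcoe : Function.Injective coe := DFunLike.coe_injective
  have hfinrank (L : Submodule ℂ 𝓓(halfLine, ℂ)) :
      Module.finrank ℂ (L.map coe) = Module.finrank ℂ L :=
    (Submodule.equivMapOfInjective coe hcoe L).finrank_eq.symm
  constructor
  · rintro ⟨L, htest, rfl, hneg⟩
    have hmap : (L.comap coe).map coe = L := Submodule.map_comap_eq_of_le fun f hf => by
      lift f to 𝓓(halfLine, ℂ) using htest f hf
      exact ⟨f, rfl⟩
    -- If `finrank` is `0`, then `L` may be infinite-dimensional.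
    rcases Nat.eq_zero_or_pos (Module.finrank ℂ L) with h0 | hpos
    · exact ⟨⊥, inferInstance, by simp [h0], by simp⟩
    · rw [← hmap, hfinrank] at hpos
      refine ⟨L.comap coe, .of_finrank_pos hpos, by rw [← hfinrank, hmap], fun f hf hf0 => ?_⟩
      exact hneg f hf fun h => hf0 (DFunLike.coe_injective h)
  · rintro ⟨L, -, rfl, hneg⟩
    refine ⟨L.map coe, ?_, hfinrank L, ?_⟩
    · rintro _ ⟨f, -, rfl⟩
      exact isTestFun_coe f
    · rintro _ ⟨f, hf, rfl⟩ hf0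
      exact hneg f hf fun h => hf0 (by rw [h, map_zero])

theorem forall_hankelQF_nonneg_iff_not_negSubspace_one {h : ℝ → ℂ}
    (hh : ContinuousOn h (Ioi 0)) (hreal : ∀ t, 0 < t → (h t).im = 0) :
    (∀ f, IsTestFun f → 0 ≤ hankelQF h f) ↔ ¬ negSubspace (hankelQF h) 1 := by
  rw [negSubspace_iff_exists_submodule_testFunction]
  constructor
  · rintro hnonneg ⟨L, -, hL, hneg⟩
    have hL0 : L ≠ ⊥ := by
      rintro rfl
      simp at hL
    obtain ⟨f, hf, hf0⟩ := L.exists_mem_ne_zero_of_ne_bot hL0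
    exact (hneg f hf hf0).not_ge (hnonneg f (isTestFun_coe f))
  · intro hneg f hf
    lift f to 𝓓(halfLine, ℂ) using hf
    by_contra hlt
    have hfim : (hankelForm hh f f).im = 0 :=
      Complex.conj_eq_iff_im.1 ((isSymm_hankelForm hh hreal).eq f f)
    rw [hankelQF_eq_hankelForm hh] at hlt
    have hneg_f : hankelForm hh f f < 0 := by
      simpa [Complex.le_def, Complex.lt_def, hfim] using hlt
    have hf0 : f ≠ 0 := by
      rintro rfl
      simp at hneg_f
    refine hneg ⟨ℂ ∙ f, inferInstance, finrank_span_singleton hf0, fun g hg hg0 => ?_⟩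
    obtain ⟨c, rfl⟩ := Submodule.mem_span_singleton.1 hg
    have hc : 0 < conj c * c := by
      rw [← Complex.normSq_eq_conj_mul_self]
      exact_mod_cast Complex.normSq_pos.2 (left_ne_zero_of_smul hg0)
    rw [hankelQF_eq_hankelForm hh, LinearMap.map_smulₛₗ₂, map_smul, smul_smul, smul_eq_mul]
    exact mul_neg_of_pos_of_neg hc hneg_f

variable (μ : Measure ℝ) [IsLaplaceMeasure μ] {v : ℝ → ℂ}

theorem hankelQF_laplaceKernel_add (hv : ContinuousOn v (Ioi 0)) (f : 𝓓(halfLine, ℂ)) :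
    hankelQF (laplaceKernel μ + v) f = (‖laplaceL2 μ f‖ : ℂ) ^ 2 + hankelQF v f := by
  rw [hankelQF_eq_hankelForm hv, hankelQF_eq_hankelForm ((continuousOn_laplaceKernel μ).add hv),
    hankelForm_add (continuousOn_laplaceKernel μ) hv, hankelForm_laplaceKernel,
    inner_self_eq_norm_sq_to_K]
  rfl

variable (hv : ContinuousOn v (Ioi 0))

theorem negSubspace_hankelQF_laplaceKernel_add_iff [NullSingletonClass μ]
    (hreal : ∀ t, 0 < t → (v t).im = 0) (hker : LinearMap.ker (hankelForm hv) ≠ ⊥) {N : ℕ} :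
    negSubspace (hankelQF (laplaceKernel μ + v)) N ↔ negSubspace (hankelQF v) N := by
  simp only [negSubspace_iff_exists_submodule_testFunction, hankelQF_laplaceKernel_add μ hv,
    hankelQF_eq_hankelForm hv]
  constructor
  · rintro ⟨L, hfin, hL, hneg⟩
    refine ⟨L, hfin, hL, fun f hf hf0 => (hneg f hf hf0).trans_le' ?_⟩
    have hnonneg : (0 : ℂ) ≤ (‖laplaceL2 μ f‖ : ℂ) ^ 2 := by
      exact_mod_cast sq_nonneg ‖laplaceL2 μ f‖
    exact le_add_of_nonneg_left hnonneg
  · rintro ⟨L, hfin, rfl, hneg⟩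
    have hdense := topologicalClosure_map_laplaceL2_eq_top μ hker
      fun τ f hf => rightShift_mem_ker_hankelForm hv τ hf
    exact exists_submodule_finrank_eq_norm_sq_add_neg (isSymm_hankelForm hv hreal)
      (le_top.trans_eq hdense.symm) L hneg

theorem carleman_plus_finite_rank_negative_count_general [NullSingletonClass μ]
    (hreal : ∀ t, 0 < t → (v t).im = 0) (hker : LinearMap.ker (hankelForm hv) ≠ ⊥) :
    subspaceDimSup (negSubspace (hankelQF (laplaceKernel μ + v))) =
      subspaceDimSup (negSubspace (hankelQF v)) ∧
    ((∀ f, IsTestFun f → 0 ≤ hankelQF (laplaceKernel μ + v) f) ↔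
      ∀ f, IsTestFun f → 0 ≤ hankelQF v f) := by
  have hcount : negSubspace (hankelQF (laplaceKernel μ + v)) = negSubspace (hankelQF v) :=
    funext fun _ => propext (negSubspace_hankelQF_laplaceKernel_add_iff μ hv hreal hker)
  have hreal' (t : ℝ) (ht : 0 < t) : ((laplaceKernel μ + v) t).im = 0 := by
    simp [laplaceKernel, hreal t ht]
  rw [forall_hankelQF_nonneg_iff_not_negSubspace_one ((continuousOn_laplaceKernel μ).add hv) hreal',
    forall_hankelQF_nonneg_iff_not_negSubspace_one hv hreal, hcount]
  exact ⟨rfl, Iff.rfl⟩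

theorem hankelQF_congr_s5 {h k : ℝ → ℂ} (hhk : EqOn h k (Ioi 0)) : hankelQF h = hankelQF k := by
  ext f
  refine setIntegral_congr_fun measurableSet_Ioi fun t ht => ?_
  refine setIntegral_congr_fun measurableSet_Ioi fun s hs => ?_
  simp only [hhk (mem_Ioi.2 (add_pos (mem_Ioi.1 ht) (mem_Ioi.1 hs)))]

theorem hankelQF_inv_add (v : ℝ → ℂ) :
    hankelQF (fun t => ((t⁻¹ : ℝ) : ℂ) + v t) =
      hankelQF (laplaceKernel (volume.restrict (Ioi 0)) + v) :=
  hankelQF_congr_s5 fun t ht => by rw [Pi.add_apply, laplaceKernel_volume_restrict_Ioi ht]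

end NegativeCount

/-- For the Carleman kernel perturbed by a finite-rank kernel `v`, the total number of
negative squares of the Hankel form of `h = t⁻¹ + v` equals that of `v`; in particular
the form of `h` is positive iff that of `v` is. -/
theorem carleman_plus_finite_rank_negative_count (M : ℕ) (α : ℕ → ℂ) (P : ℕ → Polynomial ℂ)
    (hdist : ∀ m < M, ∀ n < M, m ≠ n → α m ≠ α n)
    (hre : ∀ m < M, 0 < (α m).re)
    (hPne : ∀ m < M, P m ≠ 0)
    (hreal : ∀ t : ℝ, 0 < t → (finiteRankKernel M α P t).im = 0) :
    subspaceDimSup (negSubspace (hankelQF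
        (fun t : ℝ => ((t⁻¹ : ℝ) : ℂ) + finiteRankKernel M α P t))) =
      subspaceDimSup (negSubspace (hankelQF (finiteRankKernel M α P)))
    ∧ ((∀ f : ℝ → ℂ, IsTestFun f →
        0 ≤ hankelQF (fun t : ℝ => ((t⁻¹ : ℝ) : ℂ) + finiteRankKernel M α P t) f) ↔
      (∀ f : ℝ → ℂ, IsTestFun f → 0 ≤ hankelQF (finiteRankKernel M α P) f)) := by
  rw [hankelQF_inv_add]
  exact carleman_plus_finite_rank_negative_count_general _ _ hreal
    (ker_hankelForm_finiteRankKernel_ne_bot M α P hreal)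
end
end
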